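/- arXiv:2311.07018 — 2 statements merged into one kernel-verified Lean document; each statement's English description precedes it below -/
import Mathlib

section
/- Let n, m ∈ ℕ, t ≥ 0, δ > 0 and κ > 0. Let A : [t,∞) → ℝ^{n×n}, B : [t,∞) → ℝ^{n×m}, Q : [t,∞) → Sym_n(ℝ), R : [t,∞) → Sym_m(ℝ) be measurable with uniformly bounded operator norms, with Q(s) ⪰ 0, R(s) ⪰ δI_m, and ⟨(A(s) + A(s)ᵀ)v, v⟩ ≤ −2κ|v|² for all v ∈ ℝ^n and almost every s. Then there exists a constant k > 0 (depending only on n, m, δ, κ and the bounds on the coefficients) such that for every K ∈ [0, min(k, κ)) and every x_t ∈ ℝ^n, the coupled forward–backward system x'(s) = A(s)x(s) − B(s)R(s)^{-1}B(s)ᵀ y(s), y'(s) = −(Q(s)x(s) + ((2K)I + A(s))ᵀ y(s)), x(t) = x_t, admits a unique pair of locally absolutely continuous solutions (x, y) on [t,∞) with x, y ∈ L^{2,K}(t,∞;ℝ^n); moreover there is a constant C > 0, independent of x_t, such that e^{2Kt}|y(t)|² + ∫_t^∞ e^{2Ks}(|x(s)|² + |y(s)|²) ds ≤ C e^{2Kt}|x_t|².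 -/
open MeasureTheory Matrix

/-- `(x, y)` is a solution, in the weighted space `L^{2,K}(t,∞)`, of the
deterministic Hamiltonian forward–backward system
`x' = A x - B R⁻¹ Bᵀ y`, `y' = -(Q x + ((2K)I + A)ᵀ y)`, `x(t) = xt`,
the equations being understood in the locally absolutely continuous
(integral) sense. -/
def IsHamSol (t K : ℝ) {n m : ℕ} (A : ℝ → Matrix (Fin n) (Fin n) ℝ)
    (B : ℝ → Matrix (Fin n) (Fin m) ℝ) (Q : ℝ → Matrix (Fin n) (Fin n) ℝ)
    (R : ℝ → Matrix (Fin m) (Fin m) ℝ) (xt : Fin n → ℝ)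
    (x y : ℝ → (Fin n → ℝ)) : Prop :=
  x t = xt ∧
  (∀ T, t ≤ T → MeasureTheory.IntegrableOn (fun s =>
    A s *ᵥ x s - B s *ᵥ ((R s)⁻¹ *ᵥ ((B s)ᵀ *ᵥ y s))) (Set.Icc t T)) ∧
  (∀ s, t ≤ s → x s = xt + ∫ r in t..s,
    (A r *ᵥ x r - B r *ᵥ ((R r)⁻¹ *ᵥ ((B r)ᵀ *ᵥ y r)))) ∧
  (∀ T, t ≤ T → MeasureTheory.IntegrableOn (fun s =>
    -(Q s *ᵥ x s + (((2*K) • (1 : Matrix (Fin n) (Fin n) ℝ) + A s)ᵀ) *ᵥ y s))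
    (Set.Icc t T)) ∧
  (∀ s, t ≤ s → y s = y t + ∫ r in t..s,
    (-(Q r *ᵥ x r + (((2*K) • (1 : Matrix (Fin n) (Fin n) ℝ) + A r)ᵀ) *ᵥ y r))) ∧
  MeasureTheory.IntegrableOn (fun s => Real.exp (2*K*s) * (x s ⬝ᵥ x s)) (Set.Ici t) ∧
  MeasureTheory.IntegrableOn (fun s => Real.exp (2*K*s) * (y s ⬝ᵥ y s)) (Set.Ici t)

/-- `x` is a primitive of the locally integrable function `f` on `[t, ∞)`. -/
def IsPrim (t : ℝ) (f x : ℝ → ℝ) : Prop :=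
  (∀ T, t ≤ T → IntegrableOn f (Set.Icc t T)) ∧
    ∀ s, t ≤ s → x s = x t + ∫ r in t..s, f r

namespace IsPrim

variable {t : ℝ} {f g x y : ℝ → ℝ}

lemma intervalIntegrable (h : IsPrim t f x) {T : ℝ} (hT : t ≤ T) :
    IntervalIntegrable f volume t T := by
  rw [intervalIntegrable_iff_integrableOn_Icc_of_le hT]
  exact h.1 T hT

lemma continuousOn (h : IsPrim t f x) (T : ℝ) : ContinuousOn x (Set.Icc t T) := by
  rcases lt_or_ge T t with hT | hT
  · simp [Set.Icc_eq_empty (not_le.2 hT)]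
  have h1 : ContinuousOn (fun s => x t + ∫ r in t..s, f r) (Set.Icc t T) := by
    have := intervalIntegral.continuousOn_primitive_interval (a := t) (b := T) (f := f)
      (μ := volume) (by rw [Set.uIcc_of_le hT]; exact h.1 T hT)
    rw [Set.uIcc_of_le hT] at this
    exact continuousOn_const.add this
  exact h1.congr fun s hs => h.2 s hs.1

lemma continuousOn_Ici (h : IsPrim t f x) : ContinuousOn x (Set.Ici t) := by
  intro s hs
  have h1 := h.continuousOn (s + 1) s ⟨hs, by linarith⟩
  refine h1.mono_of_mem_nhdsWithin ?_
  rw [← Set.Ici_inter_Iic]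
  exact Filter.inter_mem self_mem_nhdsWithin
    (mem_nhdsWithin_of_mem_nhds (Iic_mem_nhds (by linarith)))

lemma aestronglyMeasurable (h : IsPrim t f x) :
    AEStronglyMeasurable x (volume.restrict (Set.Ici t)) :=
  h.continuousOn_Ici.aestronglyMeasurable measurableSet_Ici

lemma aestronglyMeasurable_deriv (h : IsPrim t f x) :
    AEStronglyMeasurable f (volume.restrict (Set.Ici t)) := by
  have : (Set.Ici t) = ⋃ k : ℕ, Set.Icc t (t + k) := by
    ext s
    simp only [Set.mem_Ici, Set.mem_iUnion, Set.mem_Icc]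
    refine ⟨fun hs => ?_, fun ⟨_, hs, _⟩ => hs⟩
    obtain ⟨k, hk⟩ := exists_nat_ge (s - t)
    exact ⟨k, hs, by linarith⟩
  rw [this, aestronglyMeasurable_iUnion_iff]
  exact fun k => (h.1 _ (by simp)).aestronglyMeasurable

lemma congr_deriv (h : IsPrim t f x) (hfg : f =ᵐ[volume.restrict (Set.Ici t)] g) :
    IsPrim t g x := by
  refine ⟨fun T hT => (h.1 T hT).congr (ae_restrict_of_ae_restrict_of_subset
    Set.Icc_subset_Ici_self hfg), fun s hs => ?_⟩
  rw [h.2 s hs]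
  congr 1
  rw [intervalIntegral.integral_of_le hs, intervalIntegral.integral_of_le hs]
  exact integral_congr_ae (ae_restrict_of_ae_restrict_of_subset
    (Set.Ioc_subset_Icc_self.trans Set.Icc_subset_Ici_self) hfg)

lemma add (hx : IsPrim t f x) (hy : IsPrim t g y) :
    IsPrim t (fun s => f s + g s) (fun s => x s + y s) := by
  refine ⟨fun T hT => (hx.1 T hT).add (hy.1 T hT), fun s hs => ?_⟩
  simp only
  rw [hx.2 s hs, hy.2 s hs, intervalIntegral.integral_add (hx.intervalIntegrable hs)
    (hy.intervalIntegrable hs)]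
  ring

lemma sub (hx : IsPrim t f x) (hy : IsPrim t g y) :
    IsPrim t (fun s => f s - g s) (fun s => x s - y s) := by
  refine ⟨fun T hT => (hx.1 T hT).sub (hy.1 T hT), fun s hs => ?_⟩
  simp only
  rw [hx.2 s hs, hy.2 s hs, intervalIntegral.integral_sub (hx.intervalIntegrable hs)
    (hy.intervalIntegrable hs)]
  ring

lemma const (c : ℝ) : IsPrim t (fun _ => 0) (fun _ => c) := by
  refine ⟨fun T hT => integrableOn_zero, fun s hs => ?_⟩
  simp

lemma sum {ι : Type*} (S : Finset ι) {f x : ι → ℝ → ℝ} (h : ∀ i ∈ S, IsPrim t (f i) (x i)) :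
    IsPrim t (fun s => ∑ i ∈ S, f i s) (fun s => ∑ i ∈ S, x i s) := by
  classical
  induction S using Finset.induction_on with
  | empty => simpa using const 0
  | insert a S ha ih =>
    simp only [Finset.sum_insert ha]
    exact (h a (by simp)).add (ih fun i hi => h i (by simp [hi]))

lemma of_hasDerivAt (hx : ∀ s, HasDerivAt x (f s) s) (hf : Continuous f) : IsPrim t f x := by
  refine ⟨fun T _ => hf.continuousOn.integrableOn_Icc, fun s _ => ?_⟩
  rw [intervalIntegral.integral_eq_sub_of_hasDerivAt (fun r _ => hx r)
    (hf.intervalIntegrable _ _)]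
  ring

lemma of_integral (hf : ∀ T, t ≤ T → IntegrableOn f (Set.Icc t T)) (c : ℝ) :
    IsPrim t f (fun s => c + ∫ r in t..s, f r) :=
  ⟨hf, fun s _ => by simp⟩

lemma mul (hx : IsPrim t f x) (hy : IsPrim t g y) :
    IsPrim t (fun s => f s * y s + x s * g s) (fun s => x s * y s) := by
  refine ⟨fun T hT => ((hx.1 T hT).mul_continuousOn (hy.continuousOn T) isCompact_Icc).add
    ((hy.1 T hT).continuousOn_mul (hx.continuousOn T) isCompact_Icc), fun T hT => ?_⟩
  have hac : ∀ {f x : ℝ → ℝ}, IsPrim t f x →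
      AbsolutelyContinuousOnInterval (fun s => x t + ∫ r in t..s, f r) t T := by
    intro f x h
    exact (contDiff_const.contDiffOn.absolutelyContinuousOnInterval (f := fun _ => x t)).add
      ((h.intervalIntegrable hT).absolutelyContinuousOnInterval_intervalIntegral (by simp))
  have key := (hac hx).integral_deriv_mul_eq_sub (hac hy)
  simp only [intervalIntegral.integral_same, add_zero, ← hx.2 T hT, ← hy.2 T hT] at key
  simp only
  rw [eq_comm, ← eq_sub_iff_add_eq', ← key]
  refine intervalIntegral.integral_congr_ae ?_
  filter_upwards [(hx.intervalIntegrable hT).ae_hasDerivAt_integral,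
    (hy.intervalIntegrable hT).ae_hasDerivAt_integral] with s h1 h2 hs
  have hs' := Set.uIoc_subset_uIcc hs
  have hts : t ≤ s := by rw [Set.uIcc_of_le hT] at hs'; exact hs'.1
  rw [((h1 hs' t (by simp)).const_add (x t)).deriv, ((h2 hs' t (by simp)).const_add (y t)).deriv,
    ← hx.2 s hts, ← hy.2 s hts]

/-- An integrable function on `[t, ∞)` with an integrable derivative vanishes at infinity. -/
lemma integral_deriv (h : IsPrim t f x) (hx : IntegrableOn x (Set.Ici t))
    (hf : IntegrableOn f (Set.Ici t)) : ∫ s in Set.Ici t, f s = -x t := by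
  have h1 : Filter.Tendsto (fun s => ∫ r in t..s, f r) Filter.atTop
      (nhds (∫ r in Set.Ioi t, f r)) :=
    intervalIntegral_tendsto_integral_Ioi t (hf.mono_set Set.Ioi_subset_Ici_self)
      Filter.tendsto_id
  have h2 : Filter.Tendsto x Filter.atTop (nhds (x t + ∫ r in Set.Ioi t, f r)) := by
    refine (h1.const_add (x t)).congr' ?_
    filter_upwards [Filter.eventually_ge_atTop t] with s hs using (h.2 s hs).symm
  have h3 : x t + ∫ r in Set.Ioi t, f r = 0 := by
    have h4 : IntegrableAtFilter x Filter.atTop volume := ⟨Set.Ici t, Filter.Ici_mem_atTop t, hx⟩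
    refine h4.eq_zero_of_tendsto (fun s hs => ?_) h2
    obtain ⟨b, hb⟩ := Filter.mem_atTop_sets.1 hs
    rw [← top_le_iff, ← Real.volume_Ici (a := b)]
    exact measure_mono hb
  rw [integral_Ici_eq_integral_Ioi]
  linarith

end IsPrim

section ScalarL2

variable {t lam : ℝ} {f g x y : ℝ → ℝ}

lemma MeasureTheory.MemLp.integrableOn_Icc_of_two (hf : MemLp f 2 (volume.restrict (Set.Ici t)))
    (T : ℝ) : IntegrableOn f (Set.Icc t T) := by
  have : MemLp f 2 (volume.restrict (Set.Icc t T)) :=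
    hf.mono_measure (Measure.restrict_mono Set.Icc_subset_Ici_self le_rfl)
  exact this.integrable (by norm_num)

lemma IsPrim.memLp_two_of_integral_sq_le (h : IsPrim t f x) {c : ℝ}
    (hc : ∀ T, t ≤ T → ∫ s in t..T, x s ^ 2 ≤ c) :
    MemLp x 2 (volume.restrict (Set.Ici t)) ∧ ∫ s in Set.Ici t, x s ^ 2 ≤ c := by
  have hi : IntegrableOn (fun s => x s ^ 2) (Set.Ioi t) := by
    refine integrableOn_Ioi_of_intervalIntegral_norm_bounded (l := Filter.atTop) (b := id) c t
      (fun T => ?_) Filter.tendsto_id ?_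
    · exact (((h.continuousOn T).pow 2).integrableOn_Icc).mono_set Set.Ioc_subset_Icc_self
    · filter_upwards [Filter.eventually_ge_atTop t] with T hT
      simpa using hc T hT
  refine ⟨?_, ?_⟩
  · rw [memLp_two_iff_integrable_sq h.aestronglyMeasurable]
    exact (integrableOn_Ici_iff_integrableOn_Ioi (by simp)).2 hi
  · rw [integral_Ici_eq_integral_Ioi]
    refine le_of_tendsto (intervalIntegral_tendsto_integral_Ioi t hi Filter.tendsto_id) ?_
    filter_upwards [Filter.eventually_ge_atTop t] with T hT using hc T hT

lemma intervalIntegral_sq_le_integral_Ici (hf : MemLp f 2 (volume.restrict (Set.Ici t)))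
    {T : ℝ} (hT : t ≤ T) : ∫ s in t..T, f s ^ 2 ≤ ∫ s in Set.Ici t, f s ^ 2 := by
  rw [intervalIntegral.integral_of_le hT]
  exact setIntegral_mono_set hf.integrable_sq (ae_of_all _ fun s => sq_nonneg _)
    (Set.Ioc_subset_Icc_self.trans Set.Icc_subset_Ici_self).eventuallyLE

lemma IsPrim.memLp_of_forward (hlam : 0 < lam) (h : IsPrim t (fun s => -lam * x s + f s) x)
    (h0 : x t = 0) (hf : MemLp f 2 (volume.restrict (Set.Ici t))) :
    MemLp x 2 (volume.restrict (Set.Ici t)) ∧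
      ∫ s in Set.Ici t, x s ^ 2 ≤ (lam⁻¹) ^ 2 * ∫ s in Set.Ici t, f s ^ 2 := by
  refine h.memLp_two_of_integral_sq_le fun T hT => ?_
  have h1 := (h.mul h).2 T hT
  have hx2 : IntervalIntegrable (fun s => x s ^ 2) volume t T :=
    (((h.continuousOn T).pow 2).mono (Set.uIcc_of_le hT).le).intervalIntegrable
  have hf2 : IntervalIntegrable (fun s => f s ^ 2) volume t T := by
    rw [intervalIntegrable_iff_integrableOn_Icc_of_le hT]
    exact IntegrableOn.mono_set hf.integrable_sq Set.Icc_subset_Ici_self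
  have h2 : ∫ r in t..T, ((-lam * x r + f r) * x r + x r * (-lam * x r + f r))
      ≤ ∫ r in t..T, (-lam * x r ^ 2 + lam⁻¹ * f r ^ 2) := by
    refine intervalIntegral.integral_mono_on hT ((h.mul h).intervalIntegrable hT)
      ((hx2.const_mul _).add (hf2.const_mul _)) fun r _ => ?_
    have h3 : 0 ≤ lam⁻¹ * (lam * x r - f r) ^ 2 := by positivity
    have h4 : lam⁻¹ * (lam * x r - f r) ^ 2
        = lam * x r ^ 2 - 2 * (x r * f r) + lam⁻¹ * f r ^ 2 := by field_simp; ring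
    linarith
  rw [intervalIntegral.integral_add (hx2.const_mul _) (hf2.const_mul _),
    intervalIntegral.integral_const_mul, intervalIntegral.integral_const_mul] at h2
  have h5 : lam * ∫ s in t..T, x s ^ 2 ≤ lam⁻¹ * ∫ s in t..T, f s ^ 2 := by
    nlinarith [mul_self_nonneg (x T), h0]
  calc ∫ s in t..T, x s ^ 2 = lam⁻¹ * (lam * ∫ s in t..T, x s ^ 2) := by field_simp
    _ ≤ lam⁻¹ * (lam⁻¹ * ∫ s in t..T, f s ^ 2) := by gcongr
    _ ≤ lam⁻¹ * (lam⁻¹ * ∫ s in Set.Ici t, f s ^ 2) := by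
      gcongr
      exact intervalIntegral_sq_le_integral_Ici hf hT
    _ = _ := by ring

lemma IsPrim.memLp_of_backward (hlam : 0 < lam) (h : IsPrim t (fun s => lam * y s - g s) y)
    {c : ℝ} (hc : ∀ T, t ≤ T → |y T| ≤ c) (hg : MemLp g 2 (volume.restrict (Set.Ici t))) :
    MemLp y 2 (volume.restrict (Set.Ici t)) := by
  refine (h.memLp_two_of_integral_sq_le
    (c := lam⁻¹ * (c ^ 2 + lam⁻¹ * ∫ s in Set.Ici t, g s ^ 2)) fun T hT => ?_).1
  have h1 := (h.mul h).2 T hT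
  have hy2 : IntervalIntegrable (fun s => y s ^ 2) volume t T :=
    (((h.continuousOn T).pow 2).mono (Set.uIcc_of_le hT).le).intervalIntegrable
  have hg2 : IntervalIntegrable (fun s => g s ^ 2) volume t T := by
    rw [intervalIntegrable_iff_integrableOn_Icc_of_le hT]
    exact IntegrableOn.mono_set hg.integrable_sq Set.Icc_subset_Ici_self
  have h2 : ∫ r in t..T, (lam * y r ^ 2 - lam⁻¹ * g r ^ 2) ≤
      ∫ r in t..T, ((lam * y r - g r) * y r + y r * (lam * y r - g r)) := by
    refine intervalIntegral.integral_mono_on hT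
      ((hy2.const_mul _).sub (hg2.const_mul _)) ((h.mul h).intervalIntegrable hT) fun r _ => ?_
    have h3 : 0 ≤ lam⁻¹ * (lam * y r - g r) ^ 2 := by positivity
    have h4 : lam⁻¹ * (lam * y r - g r) ^ 2
        = lam * y r ^ 2 - 2 * (y r * g r) + lam⁻¹ * g r ^ 2 := by field_simp; ring
    linarith
  rw [intervalIntegral.integral_sub (hy2.const_mul _) (hg2.const_mul _),
    intervalIntegral.integral_const_mul, intervalIntegral.integral_const_mul] at h2
  have h5 : y T * y T ≤ c ^ 2 := by
    have := abs_le_abs_of_nonneg (abs_nonneg _) (hc T hT)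
    nlinarith [sq_abs (y T), sq_abs c, abs_nonneg (y T), hc T hT]
  have h6 : lam * ∫ s in t..T, y s ^ 2 ≤ c ^ 2 + lam⁻¹ * ∫ s in t..T, g s ^ 2 := by
    nlinarith [mul_self_nonneg (y t)]
  calc ∫ s in t..T, y s ^ 2 = lam⁻¹ * (lam * ∫ s in t..T, y s ^ 2) := by field_simp
    _ ≤ lam⁻¹ * (c ^ 2 + lam⁻¹ * ∫ s in t..T, g s ^ 2) := by gcongr
    _ ≤ lam⁻¹ * (c ^ 2 + lam⁻¹ * ∫ s in Set.Ici t, g s ^ 2) := by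
      gcongr
      exact intervalIntegral_sq_le_integral_Ici hg hT

/-- The solution of `x' = -lam x + f`, `x(t) = 0`. -/
noncomputable def forwardSol (t lam : ℝ) (f : ℝ → ℝ) (s : ℝ) : ℝ :=
  Real.exp (-lam * s) * (0 + ∫ r in t..s, Real.exp (lam * r) * f r)

/-- The solution of `y' = lam y - g` that decays at infinity. -/
noncomputable def backwardSol (t lam : ℝ) (g : ℝ → ℝ) (s : ℝ) : ℝ :=
  Real.exp (lam * s) * ((∫ r in Set.Ici t, Real.exp (-lam * r) * g r) +
    ∫ r in t..s, -(Real.exp (-lam * r) * g r))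

lemma isPrim_exp (t c : ℝ) :
    IsPrim t (fun s => c * Real.exp (c * s)) (fun s => Real.exp (c * s)) := by
  refine IsPrim.of_hasDerivAt (fun s => ?_) (by fun_prop)
  have := ((hasDerivAt_id s).const_mul c).exp
  simpa [mul_comm] using this

lemma forwardSol_self : forwardSol t lam f t = 0 := by simp [forwardSol]

lemma isPrim_forwardSol (hf : MemLp f 2 (volume.restrict (Set.Ici t))) :
    IsPrim t (fun s => -lam * forwardSol t lam f s + f s) (forwardSol t lam f) := by
  have h1 : ∀ T, t ≤ T → IntegrableOn (fun r => Real.exp (lam * r) * f r) (Set.Icc t T) :=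
    fun T _ => (hf.integrableOn_Icc_of_two T).continuousOn_mul (by fun_prop) isCompact_Icc
  refine ((isPrim_exp t (-lam)).mul (IsPrim.of_integral h1 0)).congr_deriv (ae_of_all _ fun s => ?_)
  have : Real.exp (-lam * s) * Real.exp (lam * s) = 1 := by rw [← Real.exp_add]; simp
  simp only [forwardSol]
  linear_combination f s * this

lemma memLp_exp (t : ℝ) (hlam : 0 < lam) :
    MemLp (fun r => Real.exp (-lam * r)) 2 (volume.restrict (Set.Ici t)) := by
  rw [memLp_two_iff_integrable_sq (by fun_prop)]
  have : IntegrableOn (fun r => Real.exp (-(2 * lam) * r)) (Set.Ici t) :=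
    (integrableOn_Ici_iff_integrableOn_Ioi (by simp)).2 (integrableOn_exp_mul_Ioi (by linarith) t)
  refine this.congr (ae_of_all _ fun r => ?_)
  simp only
  rw [← Real.exp_nat_mul]
  congr 1
  push_cast
  ring

lemma integrableOn_exp_mul (hlam : 0 < lam) (hg : MemLp g 2 (volume.restrict (Set.Ici t))) :
    IntegrableOn (fun r => Real.exp (-lam * r) * g r) (Set.Ici t) :=
  (memLp_exp t hlam).integrable_mul hg

lemma isPrim_backwardSol (hg : MemLp g 2 (volume.restrict (Set.Ici t))) :
    IsPrim t (fun s => lam * backwardSol t lam g s - g s) (backwardSol t lam g) := by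
  have h1 : ∀ T, t ≤ T → IntegrableOn (fun r => -(Real.exp (-lam * r) * g r)) (Set.Icc t T) :=
    fun T _ => ((hg.integrableOn_Icc_of_two T).continuousOn_mul (by fun_prop) isCompact_Icc).neg
  refine ((isPrim_exp t lam).mul (IsPrim.of_integral h1 _)).congr_deriv (ae_of_all _ fun s => ?_)
  have : Real.exp (lam * s) * Real.exp (-lam * s) = 1 := by rw [← Real.exp_add]; simp
  simp only [backwardSol]
  linear_combination -g s * this

lemma memLp_backwardSol (hlam : 0 < lam) (hg : MemLp g 2 (volume.restrict (Set.Ici t))) :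
    MemLp (backwardSol t lam g) 2 (volume.restrict (Set.Ici t)) := by
  have hint := integrableOn_exp_mul hlam hg
  refine (isPrim_backwardSol hg).memLp_of_backward hlam
    (c := lam⁻¹ + ∫ s in Set.Ici t, g s ^ 2) (fun T hT => ?_) hg
  have hsub : Set.Ioi T ⊆ Set.Ici t := fun s hs => hT.trans (le_of_lt hs)
  have h1 : backwardSol t lam g T
      = ∫ r in Set.Ioi T, Real.exp (lam * T) * (Real.exp (-lam * r) * g r) := by
    rw [backwardSol, integral_const_mul, intervalIntegral.integral_neg,
      integral_Ici_eq_integral_Ioi,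
      ← intervalIntegral.integral_Ioi_sub_Ioi (hint.mono_set Set.Ioi_subset_Ici_self) hT]
    ring
  have h2 : IntegrableOn (fun r => Real.exp (-lam * r)) (Set.Ioi T) :=
    integrableOn_exp_mul_Ioi (by linarith) T
  have h3 : IntegrableOn (fun r => g r ^ 2) (Set.Ioi T) :=
    IntegrableOn.mono_set hg.integrable_sq hsub
  calc |backwardSol t lam g T|
      ≤ ∫ r in Set.Ioi T, |Real.exp (lam * T) * (Real.exp (-lam * r) * g r)| := by
        rw [h1]; exact abs_integral_le_integral_abs
    _ ≤ ∫ r in Set.Ioi T, (Real.exp (lam * T) * Real.exp (-lam * r) + g r ^ 2) := by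
        refine setIntegral_mono_on ((hint.mono_set hsub).const_mul _).abs
          ((h2.const_mul _).add h3) measurableSet_Ioi fun r hr => ?_
        have hr' : T < r := hr
        rw [← mul_assoc, abs_mul, ← Real.exp_add, Real.abs_exp]
        have he : Real.exp (lam * T + -lam * r) ≤ 1 := by
          rw [Real.exp_le_one_iff]; nlinarith
        have he0 := Real.exp_pos (lam * T + -lam * r)
        nlinarith [sq_abs (g r), abs_nonneg (g r), sq_nonneg (|g r| - 1), sq_nonneg (|g r|)]
    _ = lam⁻¹ + ∫ r in Set.Ioi T, g r ^ 2 := by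
        rw [integral_add (h2.const_mul _) h3, integral_const_mul,
          integral_exp_mul_Ioi (by linarith)]
        congr 1
        have : Real.exp (lam * T) * Real.exp (-lam * T) = 1 := by rw [← Real.exp_add]; simp
        rw [neg_div_neg_eq, ← mul_div_assoc, this, one_div]
    _ ≤ _ := by
        refine add_le_add_right ?_ _
        exact setIntegral_mono_set hg.integrable_sq (ae_of_all _ fun s => sq_nonneg _)
          hsub.eventuallyLE

lemma memLp_forwardSol (hlam : 0 < lam) (hf : MemLp f 2 (volume.restrict (Set.Ici t))) :
    MemLp (forwardSol t lam f) 2 (volume.restrict (Set.Ici t)) ∧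
      ∫ s in Set.Ici t, forwardSol t lam f s ^ 2 ≤
        (lam⁻¹) ^ 2 * ∫ s in Set.Ici t, f s ^ 2 :=
  (isPrim_forwardSol hf).memLp_of_forward hlam forwardSol_self hf

lemma IsPrim.integral_mul_add_mul (hx : IsPrim t f x) (hy : IsPrim t g y)
    (hf2 : MemLp f 2 (volume.restrict (Set.Ici t)))
    (hx2 : MemLp x 2 (volume.restrict (Set.Ici t)))
    (hg2 : MemLp g 2 (volume.restrict (Set.Ici t)))
    (hy2 : MemLp y 2 (volume.restrict (Set.Ici t))) :
    ∫ s in Set.Ici t, (f s * y s + x s * g s) = -(x t * y t) :=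
  (hx.mul hy).integral_deriv (hx2.integrable_mul hy2)
    ((hf2.integrable_mul hy2).add (hx2.integrable_mul hg2))

lemma integral_forwardSol_mul (hlam : 0 < lam) (hf : MemLp f 2 (volume.restrict (Set.Ici t)))
    (hg : MemLp g 2 (volume.restrict (Set.Ici t))) :
    ∫ s in Set.Ici t, forwardSol t lam f s * g s
      = ∫ s in Set.Ici t, f s * backwardSol t lam g s := by
  have hx2 := (memLp_forwardSol hlam hf).1
  have hy2 := memLp_backwardSol hlam hg
  have h := (isPrim_forwardSol (lam := lam) hf).integral_mul_add_mul (isPrim_backwardSol hg)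
    ((hx2.const_mul _).add hf) hx2 ((hy2.const_mul _).sub hg) hy2
  rw [forwardSol_self, zero_mul, neg_zero] at h
  have h' : ∫ s in Set.Ici t, (f s * backwardSol t lam g s - forwardSol t lam f s * g s) = 0 := by
    rw [← h]
    congr 1
    ext s
    ring
  have h2 := integral_sub (hf.integrable_mul hy2) (hx2.integrable_mul hg)
  simp only [Pi.mul_apply] at h2
  linarith

end ScalarL2

section Abstract

open ContinuousLinearMap

/-- The optimality system of a linear-quadratic problem in Hilbert spaces whose state equation is
`X = J (M X + B u) + e` is solvable. -/
lemma exists_optimality_system {H U : Type*} [NormedAddCommGroup H] [InnerProductSpace ℝ H]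
    [CompleteSpace H] [NormedAddCommGroup U] [InnerProductSpace ℝ U] [CompleteSpace U]
    (J M Q : H →L[ℝ] H) (B : U →L[ℝ] H) (R : U →L[ℝ] U) {δ : ℝ} (hδ : 0 < δ)
    (hJM : ‖J * M‖ < 1) (hQ : ∀ h, 0 ≤ inner ℝ (Q h) h)
    (hR : ∀ u, δ * ‖u‖ ^ 2 ≤ inner ℝ (R u) u) (e : H) :
    ∃ (X Y : H) (u : U), X = J (M X + B u) + e ∧ Y = adjoint J (adjoint M Y + Q X) ∧
      R u = -adjoint B Y := by
  obtain ⟨S, hS1, hS2⟩ : ∃ S : H →L[ℝ] H, (1 - J * M) * S = 1 ∧ S * (1 - J * M) = 1 :=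
    ⟨_, (Units.oneSub (J * M) hJM).mul_inv, (Units.oneSub (J * M) hJM).inv_mul⟩
  have hS3 : ∀ h, S h = J (M (S h)) + h := fun h => by
    have := congrArg (fun T : H →L[ℝ] H => T h) hS1
    simp only [mul_apply_eq_comp, _root_.sub_apply, one_apply_eq_self] at this
    rw [← sub_eq_iff_eq_add']
    exact this
  have hS4 : ∀ h, adjoint S h = adjoint M (adjoint J (adjoint S h)) + h := fun h => by
    refine ext_inner_left ℝ fun v => ?_
    have := congrArg (fun T : H →L[ℝ] H => T v) hS2
    simp only [mul_apply_eq_comp, _root_.sub_apply, one_apply_eq_self, map_sub] at this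
    rw [inner_add_right]
    simp only [adjoint_inner_right]
    rw [← sub_eq_iff_eq_add', ← inner_sub_left, this]
  let T : H →L[ℝ] H := S * J
  let N : U →L[ℝ] U := R + adjoint B ∘L adjoint T ∘L Q ∘L T ∘L B
  have hN : IsUnit N := by
    refine isUnit_of_forall_le_norm_inner_map N (c := ⟨δ, hδ.le⟩) hδ fun u => ?_
    refine le_trans ?_ (le_abs_self _)
    have h1 : inner ℝ (N u) u = inner ℝ (R u) u + inner ℝ (Q (T (B u))) (T (B u)) := by
      simp [N, inner_add_left, adjoint_inner_left]
    rw [h1]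
    have := hQ (T (B u))
    have := hR u
    change ‖u‖ ^ 2 * δ ≤ _
    linarith
  obtain ⟨u, hu⟩ := (isUnit_iff_bijective.1 hN).2 (-adjoint B (adjoint T (Q (S e))))
  refine ⟨S (e + J (B u)), adjoint T (Q (S (e + J (B u)))), u, ?_, ?_, ?_⟩
  · rw [map_add J, add_assoc, add_comm _ e]
    exact hS3 _
  · have hT : ∀ h, adjoint T h = adjoint J (adjoint S h) := fun h => by
      refine ext_inner_left ℝ fun v => ?_
      simp [T, adjoint_inner_right]
    rw [hT, ← hS4]
  · have h1 : N u = R u + adjoint B (adjoint T (Q (S (J (B u))))) := by simp [N, T]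
    rw [h1] at hu
    rw [map_add S, map_add Q, map_add (adjoint T), map_add (adjoint B), neg_add, ← hu]
    abel

end Abstract

section Pointwise

variable {p q : ℕ}

lemma dotProduct_self_nonneg' (v : Fin p → ℝ) : 0 ≤ v ⬝ᵥ v :=
  Finset.sum_nonneg fun i _ => mul_self_nonneg (v i)

lemma two_mul_dotProduct_le {c : ℝ} (hc : 0 < c) (v w : Fin p → ℝ) :
    2 * (v ⬝ᵥ w) ≤ c * (v ⬝ᵥ v) + c⁻¹ * (w ⬝ᵥ w) := by
  have h := dotProduct_self_nonneg' (c • v - w)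
  simp only [sub_dotProduct, dotProduct_sub, smul_dotProduct, dotProduct_smul, smul_eq_mul,
    dotProduct_comm w v] at h
  have h2 : 0 ≤ c⁻¹ * (c * (c * (v ⬝ᵥ v)) - c * (v ⬝ᵥ w) - (c * (v ⬝ᵥ w) - w ⬝ᵥ w)) :=
    mul_nonneg (inv_nonneg.2 hc.le) (by linarith)
  have h3 : c⁻¹ * (c * (c * (v ⬝ᵥ v)) - c * (v ⬝ᵥ w) - (c * (v ⬝ᵥ w) - w ⬝ᵥ w))
      = c * (v ⬝ᵥ v) - 2 * (v ⬝ᵥ w) + c⁻¹ * (w ⬝ᵥ w) := by field_simp; ring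
  linarith

lemma transpose_mulVec_dotProduct (M : Matrix (Fin p) (Fin q) ℝ) (v : Fin p → ℝ)
    (w : Fin q → ℝ) : (Mᵀ *ᵥ v) ⬝ᵥ w = v ⬝ᵥ (M *ᵥ w) := by
  rw [mulVec_transpose, dotProduct_mulVec]

lemma abs_entry_le {M : Matrix (Fin p) (Fin q) ℝ} {L : ℝ}
    (h : ∀ v, (M *ᵥ v) ⬝ᵥ (M *ᵥ v) ≤ L ^ 2 * (v ⬝ᵥ v)) (i : Fin p) (j : Fin q) :
    |M i j| ≤ |L| := by
  have h1 := h (Pi.single j 1)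
  simp only [mulVec_single_one, dotProduct_single_one, Pi.single_eq_same, mul_one] at h1
  rw [← sq_le_sq]
  refine le_trans ?_ h1
  rw [sq]
  exact Finset.single_le_sum (f := fun i => M i j * M i j) (fun i _ => mul_self_nonneg _)
    (Finset.mem_univ i)

/-- A positive semidefinite symmetric matrix `Q` of norm at most `L` satisfies `Q² ≤ L Q`. -/
lemma mulVec_dotProduct_mulVec_le_of_psd {Q : Matrix (Fin p) (Fin p) ℝ} {L : ℝ} (hL : 0 < L)
    (hsym : Qᵀ = Q) (hpsd : ∀ v, 0 ≤ (Q *ᵥ v) ⬝ᵥ v)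
    (hbd : ∀ v, (Q *ᵥ v) ⬝ᵥ (Q *ᵥ v) ≤ L ^ 2 * (v ⬝ᵥ v)) (v : Fin p → ℝ) :
    (Q *ᵥ v) ⬝ᵥ (Q *ᵥ v) ≤ L * ((Q *ᵥ v) ⬝ᵥ v) := by
  set w := Q *ᵥ v with hw
  have h1 := hpsd (L • v - w)
  have h2 : (Q *ᵥ w) ⬝ᵥ v = w ⬝ᵥ w := by
    conv_lhs => rw [← hsym]
    rw [transpose_mulVec_dotProduct]
  simp only [mulVec_sub, mulVec_smul, sub_dotProduct, dotProduct_sub, smul_dotProduct,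
    dotProduct_smul, smul_eq_mul, ← hw, h2] at h1
  have h3 := two_mul_dotProduct_le (inv_pos.2 hL) (Q *ᵥ w) w
  rw [inv_inv] at h3
  have h4 : L⁻¹ * ((Q *ᵥ w) ⬝ᵥ (Q *ᵥ w)) ≤ L * (w ⬝ᵥ w) := by
    calc _ ≤ L⁻¹ * (L ^ 2 * (w ⬝ᵥ w)) := by gcongr; exact hbd w
      _ = _ := by field_simp
  have h5 : L * (w ⬝ᵥ w) ≤ L * (L * (w ⬝ᵥ v)) := by linarith
  exact le_of_mul_le_mul_left h5 hL

lemma isUnit_det_of_coercive {R : Matrix (Fin p) (Fin p) ℝ} {δ : ℝ} (hδ : 0 < δ)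
    (hR : ∀ v, δ * (v ⬝ᵥ v) ≤ (R *ᵥ v) ⬝ᵥ v) : IsUnit R.det := by
  rw [isUnit_iff_ne_zero]
  intro h
  obtain ⟨v, hv, hv0⟩ := Matrix.exists_mulVec_eq_zero_iff.2 h
  have h1 := hR v
  rw [hv0, zero_dotProduct] at h1
  have h2 : v ⬝ᵥ v = 0 := le_antisymm (by nlinarith) (dotProduct_self_nonneg' v)
  exact hv (dotProduct_self_eq_zero.1 h2)

lemma transpose_mulVec_dotProduct_self_le {M : Matrix (Fin p) (Fin q) ℝ} {L : ℝ}
    (h : ∀ v, (M *ᵥ v) ⬝ᵥ (M *ᵥ v) ≤ L ^ 2 * (v ⬝ᵥ v)) (v : Fin p → ℝ) :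
    (Mᵀ *ᵥ v) ⬝ᵥ (Mᵀ *ᵥ v) ≤ (L ^ 2 + 1) * (v ⬝ᵥ v) := by
  have h1 := h (Mᵀ *ᵥ v)
  have hc : 0 < L ^ 2 + 1 := by positivity
  have h2 := two_mul_dotProduct_le hc v (M *ᵥ (Mᵀ *ᵥ v))
  rw [← transpose_mulVec_dotProduct] at h2
  have h3 : (L ^ 2 + 1)⁻¹ * ((M *ᵥ (Mᵀ *ᵥ v)) ⬝ᵥ (M *ᵥ (Mᵀ *ᵥ v))) ≤ (Mᵀ *ᵥ v) ⬝ᵥ (Mᵀ *ᵥ v) := by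
    rw [inv_mul_le_iff₀ hc]
    nlinarith [dotProduct_self_nonneg' (Mᵀ *ᵥ v)]
  linarith

/-- With `G = B R⁻¹ Bᵀ`, one has `|G v|² ≤ (L² / δ) ⟨G v, v⟩`. -/
lemma gramian_dotProduct_self_le {B : Matrix (Fin p) (Fin q) ℝ} {R : Matrix (Fin q) (Fin q) ℝ}
    {δ L : ℝ} (hδ : 0 < δ) (hR : ∀ v, δ * (v ⬝ᵥ v) ≤ (R *ᵥ v) ⬝ᵥ v)
    (hB : ∀ v, (B *ᵥ v) ⬝ᵥ (B *ᵥ v) ≤ L ^ 2 * (v ⬝ᵥ v)) (v : Fin p → ℝ) :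
    (B *ᵥ (R⁻¹ *ᵥ (Bᵀ *ᵥ v))) ⬝ᵥ (B *ᵥ (R⁻¹ *ᵥ (Bᵀ *ᵥ v))) ≤
      L ^ 2 / δ * ((B *ᵥ (R⁻¹ *ᵥ (Bᵀ *ᵥ v))) ⬝ᵥ v) := by
  set w := R⁻¹ *ᵥ (Bᵀ *ᵥ v) with hw
  have h1 : R *ᵥ w = Bᵀ *ᵥ v := by
    rw [hw, mulVec_mulVec, Matrix.mul_nonsing_inv _ (isUnit_det_of_coercive hδ hR), one_mulVec]
  have h2 : (B *ᵥ w) ⬝ᵥ v = (R *ᵥ w) ⬝ᵥ w := by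
    rw [h1, transpose_mulVec_dotProduct, dotProduct_comm]
  rw [h2]
  calc _ ≤ L ^ 2 * (w ⬝ᵥ w) := hB w
    _ = L ^ 2 / δ * (δ * (w ⬝ᵥ w)) := by field_simp
    _ ≤ _ := by gcongr; exact hR w

end Pointwise

section Hamiltonian

variable {n m : ℕ}

/-- Pointwise assumptions on the coefficients of the Hamiltonian system. -/
structure Admissible (δ κ L : ℝ) (A : Matrix (Fin n) (Fin n) ℝ) (B : Matrix (Fin n) (Fin m) ℝ)
    (Q : Matrix (Fin n) (Fin n) ℝ) (R : Matrix (Fin m) (Fin m) ℝ) : Prop where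
  symm_Q : Qᵀ = Q
  bound_A : ∀ v, (A *ᵥ v) ⬝ᵥ (A *ᵥ v) ≤ L ^ 2 * (v ⬝ᵥ v)
  bound_B : ∀ v, (B *ᵥ v) ⬝ᵥ (B *ᵥ v) ≤ L ^ 2 * (v ⬝ᵥ v)
  bound_Q : ∀ v, (Q *ᵥ v) ⬝ᵥ (Q *ᵥ v) ≤ L ^ 2 * (v ⬝ᵥ v)
  bound_R : ∀ v, (R *ᵥ v) ⬝ᵥ (R *ᵥ v) ≤ L ^ 2 * (v ⬝ᵥ v)
  psd_Q : ∀ v, 0 ≤ (Q *ᵥ v) ⬝ᵥ v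
  coercive_R : ∀ v, δ * (v ⬝ᵥ v) ≤ (R *ᵥ v) ⬝ᵥ v
  dissipative_A : ∀ v, (A *ᵥ v) ⬝ᵥ v ≤ -κ * (v ⬝ᵥ v)

lemma add_dotProduct_self_le (v w : Fin n → ℝ) :
    (v + w) ⬝ᵥ (v + w) ≤ 2 * (v ⬝ᵥ v) + 2 * (w ⬝ᵥ w) := by
  have h := dotProduct_self_nonneg' (v - w)
  simp only [add_dotProduct, dotProduct_add, sub_dotProduct, dotProduct_sub,
    dotProduct_comm w v] at h ⊢
  linarith

namespace Admissible

variable {δ κ L : ℝ} {A : Matrix (Fin n) (Fin n) ℝ} {B : Matrix (Fin n) (Fin m) ℝ}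
  {Q : Matrix (Fin n) (Fin n) ℝ} {R : Matrix (Fin m) (Fin m) ℝ}

lemma forward_bound (h : Admissible δ κ L A B Q R) (hδ : 0 < δ) (hL : 0 < L)
    (x y : Fin n → ℝ) :
    (A *ᵥ x - B *ᵥ (R⁻¹ *ᵥ (Bᵀ *ᵥ y))) ⬝ᵥ (A *ᵥ x - B *ᵥ (R⁻¹ *ᵥ (Bᵀ *ᵥ y))) ≤
      2 * (L ^ 2 * (x ⬝ᵥ x)) + 2 * ((L ^ 2 / δ) ^ 2 * (y ⬝ᵥ y)) := by
  have hd : 0 < L ^ 2 / δ := by positivity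
  have h1 := gramian_dotProduct_self_le hδ h.coercive_R h.bound_B y
  set w := B *ᵥ (R⁻¹ *ᵥ (Bᵀ *ᵥ y))
  set d := L ^ 2 / δ
  have h2 := two_mul_dotProduct_le (inv_pos.2 hd) w y
  rw [inv_inv] at h2
  have h3 : d * (2 * (w ⬝ᵥ y)) ≤ d * (d⁻¹ * (w ⬝ᵥ w) + d * (y ⬝ᵥ y)) := by gcongr
  have h4 : d * (d⁻¹ * (w ⬝ᵥ w) + d * (y ⬝ᵥ y)) = w ⬝ᵥ w + d ^ 2 * (y ⬝ᵥ y) := by field_simp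
  have h5 := add_dotProduct_self_le (A *ᵥ x) (-w)
  rw [← sub_eq_add_neg, neg_dotProduct_neg] at h5
  linarith [h.bound_A x]

lemma backward_bound (h : Admissible δ κ L A B Q R) (x y : Fin n → ℝ) :
    (-(Q *ᵥ x + Aᵀ *ᵥ y)) ⬝ᵥ (-(Q *ᵥ x + Aᵀ *ᵥ y)) ≤
      2 * (L ^ 2 * (x ⬝ᵥ x)) + 2 * ((L ^ 2 + 1) * (y ⬝ᵥ y)) := by
  rw [neg_dotProduct_neg]
  linarith [add_dotProduct_self_le (Q *ᵥ x) (Aᵀ *ᵥ y), h.bound_Q x,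
    transpose_mulVec_dotProduct_self_le h.bound_A y]

lemma cross_term_eq (x y : Fin n → ℝ) :
    (A *ᵥ x - B *ᵥ (R⁻¹ *ᵥ (Bᵀ *ᵥ y))) ⬝ᵥ y + x ⬝ᵥ (-(Q *ᵥ x + Aᵀ *ᵥ y)) =
      -((B *ᵥ (R⁻¹ *ᵥ (Bᵀ *ᵥ y))) ⬝ᵥ y + (Q *ᵥ x) ⬝ᵥ x) := by
  have : x ⬝ᵥ (Aᵀ *ᵥ y) = (A *ᵥ x) ⬝ᵥ y := by
    rw [dotProduct_comm, transpose_mulVec_dotProduct, dotProduct_comm]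
  simp only [sub_dotProduct, dotProduct_neg, dotProduct_add, this, dotProduct_comm x (Q *ᵥ x)]
  ring

lemma gramian_nonneg (h : Admissible δ κ L A B Q R) (hδ : 0 < δ) (hL : 0 < L) (y : Fin n → ℝ) :
    0 ≤ (B *ᵥ (R⁻¹ *ᵥ (Bᵀ *ᵥ y))) ⬝ᵥ y := by
  have hd : 0 < L ^ 2 / δ := by positivity
  have := gramian_dotProduct_self_le hδ h.coercive_R h.bound_B y
  exact nonneg_of_mul_nonneg_right ((dotProduct_self_nonneg' _).trans this) hd

lemma forward_energy (h : Admissible δ κ L A B Q R) (hδ : 0 < δ) (hκ : 0 < κ) (hL : 0 < L)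
    (x y : Fin n → ℝ) :
    2 * (x ⬝ᵥ (A *ᵥ x - B *ᵥ (R⁻¹ *ᵥ (Bᵀ *ᵥ y)))) ≤ -κ * (x ⬝ᵥ x) -
      (L ^ 2 / δ + L) / κ * ((A *ᵥ x - B *ᵥ (R⁻¹ *ᵥ (Bᵀ *ᵥ y))) ⬝ᵥ y +
        x ⬝ᵥ (-(Q *ᵥ x + Aᵀ *ᵥ y))) := by
  rw [cross_term_eq]
  have h1 := gramian_dotProduct_self_le hδ h.coercive_R h.bound_B y
  have h0 := h.gramian_nonneg hδ hL y
  set w := B *ᵥ (R⁻¹ *ᵥ (Bᵀ *ᵥ y))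
  have h2 := two_mul_dotProduct_le hκ x (-w)
  rw [neg_dotProduct_neg, dotProduct_neg] at h2
  have h3 := h.dissipative_A x
  have h4 : w ⬝ᵥ w ≤ (L ^ 2 / δ + L) * (w ⬝ᵥ y + (Q *ᵥ x) ⬝ᵥ x) := by
    have : 0 ≤ L ^ 2 / δ := by positivity
    nlinarith [h.psd_Q x, mul_nonneg this (h.psd_Q x), mul_nonneg hL.le h0,
      mul_nonneg hL.le (h.psd_Q x)]
  have h5 : κ⁻¹ * (w ⬝ᵥ w) ≤ κ⁻¹ * ((L ^ 2 / δ + L) * (w ⬝ᵥ y + (Q *ᵥ x) ⬝ᵥ x)) := by gcongr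
  rw [dotProduct_sub, dotProduct_comm x (A *ᵥ x), div_eq_mul_inv]
  linarith

lemma backward_energy (h : Admissible δ κ L A B Q R) (hδ : 0 < δ) (hκ : 0 < κ) (hL : 0 < L)
    (x y : Fin n → ℝ) :
    κ * (y ⬝ᵥ y) + (L ^ 2 / δ + L) / κ * ((A *ᵥ x - B *ᵥ (R⁻¹ *ᵥ (Bᵀ *ᵥ y))) ⬝ᵥ y +
      x ⬝ᵥ (-(Q *ᵥ x + Aᵀ *ᵥ y))) ≤ 2 * (y ⬝ᵥ (-(Q *ᵥ x + Aᵀ *ᵥ y))) := by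
  rw [cross_term_eq]
  have h0 := h.gramian_nonneg hδ hL y
  set w := B *ᵥ (R⁻¹ *ᵥ (Bᵀ *ᵥ y))
  have h1 := mulVec_dotProduct_mulVec_le_of_psd hL h.symm_Q h.psd_Q h.bound_Q x
  have h2 := two_mul_dotProduct_le hκ y (Q *ᵥ x)
  have h3 := h.dissipative_A y
  have h4 : (Q *ᵥ x) ⬝ᵥ (Q *ᵥ x) ≤ (L ^ 2 / δ + L) * (w ⬝ᵥ y + (Q *ᵥ x) ⬝ᵥ x) := by
    have : 0 ≤ L ^ 2 / δ := by positivity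
    nlinarith [h.psd_Q x, mul_nonneg this (h.psd_Q x), mul_nonneg hL.le h0, mul_nonneg this h0]
  have h5 : κ⁻¹ * ((Q *ᵥ x) ⬝ᵥ (Q *ᵥ x)) ≤
      κ⁻¹ * ((L ^ 2 / δ + L) * (w ⬝ᵥ y + (Q *ᵥ x) ⬝ᵥ x)) := by gcongr
  have h6 : y ⬝ᵥ (Aᵀ *ᵥ y) = (A *ᵥ y) ⬝ᵥ y := by
    rw [dotProduct_comm, transpose_mulVec_dotProduct, dotProduct_comm]
  rw [dotProduct_neg, dotProduct_add, h6, div_eq_mul_inv]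
  linarith

end Admissible

variable {t : ℝ}

lemma vector_primitive_iff {f x : ℝ → Fin n → ℝ} :
    ((∀ T, t ≤ T → IntegrableOn f (Set.Icc t T)) ∧
      ∀ s, t ≤ s → x s = x t + ∫ r in t..s, f r) ↔
    ∀ i, IsPrim t (fun s => f s i) (fun s => x s i) := by
  have key : (∀ i T, t ≤ T → IntegrableOn (fun s => f s i) (Set.Icc t T)) →
      ∀ s, t ≤ s → ∀ i, (∫ r in t..s, f r) i = ∫ r in t..s, f r i := by
    intro h s hs i
    rw [intervalIntegral.integral_of_le hs, intervalIntegral.integral_of_le hs]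
    exact eval_integral (fun j => (h j s hs).mono_set Set.Ioc_subset_Icc_self) i
  constructor
  · rintro ⟨h1, h2⟩ i
    have h3 : ∀ i T, t ≤ T → IntegrableOn (fun s => f s i) (Set.Icc t T) :=
      fun i T hT => Integrable.eval (h1 T hT) i
    refine ⟨h3 i, fun s hs => ?_⟩
    rw [← key h3 s hs]
    exact congrFun (h2 s hs) i
  · intro h
    refine ⟨fun T hT => Integrable.of_eval fun i => (h i).1 T hT, fun s hs => funext fun i => ?_⟩
    rw [Pi.add_apply, key (fun i => (h i).1) s hs]
    exact (h i).2 s hs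

lemma integrable_dotProduct {f g : ℝ → Fin n → ℝ} {μ : Measure ℝ}
    (hf : ∀ i, MemLp (fun s => f s i) 2 μ) (hg : ∀ i, MemLp (fun s => g s i) 2 μ) :
    Integrable (fun s => f s ⬝ᵥ g s) μ :=
  integrable_finsetSum _ fun i _ => (hf i).integrable_mul (hg i)

lemma memLp_of_dotProduct_self_le {f : ℝ → Fin n → ℝ} {h : ℝ → ℝ} {μ : Measure ℝ}
    (hf : ∀ i, AEStronglyMeasurable (fun s => f s i) μ) (hh : Integrable h μ)
    (hfh : ∀ᵐ s ∂μ, f s ⬝ᵥ f s ≤ h s) (i : Fin n) : MemLp (fun s => f s i) 2 μ := by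
  rw [memLp_two_iff_integrable_sq (hf i)]
  refine hh.mono' ((hf i).pow 2) ?_
  filter_upwards [hfh] with s hs
  rw [Real.norm_of_nonneg (sq_nonneg _), sq]
  exact (Finset.single_le_sum (f := fun i => f s i * f s i) (fun i _ => mul_self_nonneg _)
    (Finset.mem_univ i)).trans hs

lemma integral_dotProduct_deriv {f g x y : ℝ → Fin n → ℝ}
    (hx : ∀ i, IsPrim t (fun s => f s i) (fun s => x s i))
    (hy : ∀ i, IsPrim t (fun s => g s i) (fun s => y s i))
    (hf2 : ∀ i, MemLp (fun s => f s i) 2 (volume.restrict (Set.Ici t)))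
    (hx2 : ∀ i, MemLp (fun s => x s i) 2 (volume.restrict (Set.Ici t)))
    (hg2 : ∀ i, MemLp (fun s => g s i) 2 (volume.restrict (Set.Ici t)))
    (hy2 : ∀ i, MemLp (fun s => y s i) 2 (volume.restrict (Set.Ici t))) :
    ∫ s in Set.Ici t, (f s ⬝ᵥ y s + x s ⬝ᵥ g s) = -(x t ⬝ᵥ y t) := by
  refine IsPrim.integral_deriv (x := fun s => x s ⬝ᵥ y s) ?_ (integrable_dotProduct hx2 hy2)
    ((integrable_dotProduct hf2 hy2).add (integrable_dotProduct hx2 hg2))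
  simp only [dotProduct, ← Finset.sum_add_distrib]
  exact IsPrim.sum _ fun i _ => (hx i).mul (hy i)

variable {A : ℝ → Matrix (Fin n) (Fin n) ℝ} {B : ℝ → Matrix (Fin n) (Fin m) ℝ}
  {Q : ℝ → Matrix (Fin n) (Fin n) ℝ} {R : ℝ → Matrix (Fin m) (Fin m) ℝ}

lemma isHamSol_iff {K : ℝ} {xt : Fin n → ℝ} {x y : ℝ → Fin n → ℝ} :
    IsHamSol t K A B Q R xt x y ↔ x t = xt ∧
      (∀ i, IsPrim t (fun s => (A s *ᵥ x s - B s *ᵥ ((R s)⁻¹ *ᵥ ((B s)ᵀ *ᵥ y s))) i)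
        (fun s => x s i)) ∧
      (∀ i, IsPrim t (fun s => (-(Q s *ᵥ x s +
        (((2*K) • (1 : Matrix (Fin n) (Fin n) ℝ) + A s)ᵀ) *ᵥ y s)) i) (fun s => y s i)) ∧
      IntegrableOn (fun s => Real.exp (2*K*s) * (x s ⬝ᵥ x s)) (Set.Ici t) ∧
      IntegrableOn (fun s => Real.exp (2*K*s) * (y s ⬝ᵥ y s)) (Set.Ici t) := by
  rw [← vector_primitive_iff, ← vector_primitive_iff, IsHamSol]
  constructor
  · rintro ⟨rfl, h1, h2, h3, h4, h5, h6⟩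
    exact ⟨rfl, ⟨h1, h2⟩, ⟨h3, h4⟩, h5, h6⟩
  · rintro ⟨rfl, ⟨h1, h2⟩, ⟨h3, h4⟩, h5, h6⟩
    exact ⟨rfl, h1, h2, h3, h4, h5, h6⟩

lemma isHamSol_zero_iff {xt : Fin n → ℝ} {x y : ℝ → Fin n → ℝ} :
    IsHamSol t 0 A B Q R xt x y ↔ x t = xt ∧
      (∀ i, IsPrim t (fun s => (A s *ᵥ x s - B s *ᵥ ((R s)⁻¹ *ᵥ ((B s)ᵀ *ᵥ y s))) i)
        (fun s => x s i)) ∧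
      (∀ i, IsPrim t (fun s => (-(Q s *ᵥ x s + (A s)ᵀ *ᵥ y s)) i) (fun s => y s i)) ∧
      (∀ i, MemLp (fun s => x s i) 2 (volume.restrict (Set.Ici t))) ∧
      (∀ i, MemLp (fun s => y s i) 2 (volume.restrict (Set.Ici t))) := by
  rw [isHamSol_iff]
  simp only [mul_zero, zero_mul, Real.exp_zero, one_mul, zero_smul, zero_add]
  refine and_congr_right fun _ => and_congr_right fun hx => and_congr_right fun hy => ?_
  constructor
  · rintro ⟨h1, h2⟩
    exact ⟨memLp_of_dotProduct_self_le (fun i => (hx i).aestronglyMeasurable) h1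
        (ae_of_all _ fun _ => le_rfl),
      memLp_of_dotProduct_self_le (fun i => (hy i).aestronglyMeasurable) h2
        (ae_of_all _ fun _ => le_rfl)⟩
  · rintro ⟨h1, h2⟩
    exact ⟨integrable_dotProduct h1 h1, integrable_dotProduct h2 h2⟩

/-- Multiplying a solution by `exp (c s)` shifts the weight by `-c` and the drift by `c`. -/
lemma IsHamSol.exp_smul {K : ℝ} {xt : Fin n → ℝ} {x y : ℝ → Fin n → ℝ}
    (h : IsHamSol t K A B Q R xt x y) (c : ℝ) :
    IsHamSol t (K - c) (fun s => A s + c • 1) B Q R (Real.exp (c * t) • xt)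
      (fun s => Real.exp (c * s) • x s) (fun s => Real.exp (c * s) • y s) := by
  rw [isHamSol_iff] at h ⊢
  obtain ⟨rfl, hx, hy, hx2, hy2⟩ := h
  refine ⟨rfl, fun i => ?_, fun i => ?_, ?_, ?_⟩
  · refine ((isPrim_exp t c).mul (hx i)).congr_deriv (ae_of_all _ fun s => ?_)
    simp only [add_mulVec, mulVec_smul, smul_mulVec, one_mulVec, Pi.sub_apply, Pi.add_apply,
      Pi.smul_apply, smul_eq_mul]
    ring
  · refine ((isPrim_exp t c).mul (hy i)).congr_deriv (ae_of_all _ fun s => ?_)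
    simp only [transpose_add, transpose_smul, transpose_one, add_mulVec, mulVec_smul, smul_mulVec,
      one_mulVec, Pi.neg_apply, Pi.add_apply, Pi.smul_apply, smul_eq_mul]
    ring
  · refine hx2.congr (ae_of_all _ fun s => ?_)
    simp only [smul_dotProduct, dotProduct_smul, smul_eq_mul, ← mul_assoc, ← Real.exp_add]
    congr 2
    ring
  · refine hy2.congr (ae_of_all _ fun s => ?_)
    simp only [smul_dotProduct, dotProduct_smul, smul_eq_mul, ← mul_assoc, ← Real.exp_add]
    congr 2
    ring

lemma IsHamSol.sub_zero {xt : Fin n → ℝ} {x₁ y₁ x₂ y₂ : ℝ → Fin n → ℝ}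
    (h₁ : IsHamSol t 0 A B Q R xt x₁ y₁) (h₂ : IsHamSol t 0 A B Q R xt x₂ y₂) :
    IsHamSol t 0 A B Q R 0 (fun s => x₁ s - x₂ s) (fun s => y₁ s - y₂ s) := by
  rw [isHamSol_zero_iff] at h₁ h₂ ⊢
  obtain ⟨h1, hx, hy, hx2, hy2⟩ := h₁
  obtain ⟨h1', hx', hy', hx2', hy2'⟩ := h₂
  refine ⟨by simp [h1, h1'], fun i => ?_, fun i => ?_, fun i => (hx2 i).sub (hx2' i),
    fun i => (hy2 i).sub (hy2' i)⟩
  · refine ((hx i).sub (hx' i)).congr_deriv (ae_of_all _ fun s => ?_)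
    simp only [mulVec_sub, Pi.sub_apply]
    ring
  · refine ((hy i).sub (hy' i)).congr_deriv (ae_of_all _ fun s => ?_)
    simp only [mulVec_sub, Pi.sub_apply, Pi.neg_apply, Pi.add_apply]
    ring

/-- The constant in the stability estimate. -/
noncomputable def stabilityConst (δ κ L : ℝ) : ℝ :=
  ((L ^ 2 / δ + L) / κ) ^ 2 + (1 + 2 * ((L ^ 2 / δ + L) / κ) ^ 2) / κ

lemma IsHamSol.estimate {δ κ L : ℝ} (hδ : 0 < δ) (hκ : 0 < κ) (hL : 0 < L)
    (hadm : ∀ᵐ s ∂(volume.restrict (Set.Ici t)), Admissible δ κ L (A s) (B s) (Q s) (R s))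
    {xt : Fin n → ℝ} {x y : ℝ → Fin n → ℝ} (h : IsHamSol t 0 A B Q R xt x y) :
    y t ⬝ᵥ y t + ∫ s in Set.Ici t, (x s ⬝ᵥ x s + y s ⬝ᵥ y s) ≤
      stabilityConst δ κ L * (xt ⬝ᵥ xt) := by
  obtain ⟨rfl, hx, hy, hx2, hy2⟩ := isHamSol_zero_iff.1 h
  have hxx := integrable_dotProduct hx2 hx2
  have hyy := integrable_dotProduct hy2 hy2
  have hf2 := memLp_of_dotProduct_self_le (fun i => (hx i).aestronglyMeasurable_deriv)
    (((hxx.const_mul (L ^ 2)).const_mul 2).add ((hyy.const_mul ((L ^ 2 / δ) ^ 2)).const_mul 2))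
    (hadm.mono fun s hs => hs.forward_bound hδ hL (x s) (y s))
  have hg2 := memLp_of_dotProduct_self_le (fun i => (hy i).aestronglyMeasurable_deriv)
    (((hxx.const_mul (L ^ 2)).const_mul 2).add ((hyy.const_mul (L ^ 2 + 1)).const_mul 2))
    (hadm.mono fun s hs => hs.backward_bound (x s) (y s))
  have hcross := (integrable_dotProduct hf2 hy2).add (integrable_dotProduct hx2 hg2)
  have e1 := integral_dotProduct_deriv hx hy hf2 hx2 hg2 hy2
  have e2 := integral_dotProduct_deriv hx hx hf2 hx2 hf2 hx2
  have e3 := integral_dotProduct_deriv hy hy hg2 hy2 hg2 hy2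
  have i2 := integral_mono_ae ((integrable_dotProduct hf2 hx2).add (integrable_dotProduct hx2 hf2))
    ((hxx.const_mul (-κ)).sub (hcross.const_mul ((L ^ 2 / δ + L) / κ)))
    (hadm.mono fun s hs => by
      have := hs.forward_energy hδ hκ hL (x s) (y s)
      simp only [Pi.add_apply, Pi.sub_apply]
      rw [dotProduct_comm _ (x s), ← two_mul]
      exact this)
  have i3 := integral_mono_ae ((hyy.const_mul κ).add (hcross.const_mul ((L ^ 2 / δ + L) / κ)))
    ((integrable_dotProduct hg2 hy2).add (integrable_dotProduct hy2 hg2))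
    (hadm.mono fun s hs => by
      have := hs.backward_energy hδ hκ hL (x s) (y s)
      simp only [Pi.add_apply]
      rw [dotProduct_comm (-(Q s *ᵥ x s + (A s)ᵀ *ᵥ y s)) (y s), ← two_mul]
      exact this)
  rw [integral_sub' (hxx.const_mul (-κ)) (hcross.const_mul ((L ^ 2 / δ + L) / κ)),
    integral_const_mul, integral_const_mul] at i2
  rw [integral_add' (hyy.const_mul κ) (hcross.const_mul ((L ^ 2 / δ + L) / κ)),
    integral_const_mul, integral_const_mul] at i3
  simp only [Pi.add_apply] at i2 i3
  rw [e1, e2] at i2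
  rw [e1, e3] at i3
  rw [integral_add hxx hyy, stabilityConst]
  have ha : 0 < (L ^ 2 / δ + L) / κ := by positivity
  set a := (L ^ 2 / δ + L) / κ
  have hc := two_mul_dotProduct_le ha (x t) (y t)
  have hc' : a * (2 * (x t ⬝ᵥ y t)) ≤ a * (a * (x t ⬝ᵥ x t) + a⁻¹ * (y t ⬝ᵥ y t)) := by gcongr
  have hc'' : a * (a * (x t ⬝ᵥ x t) + a⁻¹ * (y t ⬝ᵥ y t)) =
    a ^ 2 * (x t ⬝ᵥ x t) + y t ⬝ᵥ y t := by field_simp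
  set X := ∫ s in Set.Ici t, x s ⬝ᵥ x s
  set Y := ∫ s in Set.Ici t, y s ⬝ᵥ y s
  have hY0 : 0 ≤ Y := integral_nonneg fun s => dotProduct_self_nonneg' _
  have hκY := mul_nonneg hκ.le hY0
  have hy0 := dotProduct_self_nonneg' (y t)
  have j1 : κ * X ≤ (1 + a ^ 2) * (x t ⬝ᵥ x t) := by linarith
  have j2 : y t ⬝ᵥ y t ≤ a ^ 2 * (x t ⬝ᵥ x t) := by linarith
  have j3 : κ * Y ≤ a ^ 2 * (x t ⬝ᵥ x t) := by linarith
  have j4 : X + Y ≤ (1 + 2 * a ^ 2) / κ * (x t ⬝ᵥ x t) := by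
    rw [div_mul_eq_mul_div, le_div_iff₀ hκ]
    linarith
  linarith

lemma IsHamSol.eq_zero {δ κ L : ℝ} (hδ : 0 < δ) (hκ : 0 < κ) (hL : 0 < L)
    (hadm : ∀ᵐ s ∂(volume.restrict (Set.Ici t)), Admissible δ κ L (A s) (B s) (Q s) (R s))
    {x y : ℝ → Fin n → ℝ} (h : IsHamSol t 0 A B Q R 0 x y) {s : ℝ} (hs : t ≤ s) :
    x s = 0 ∧ y s = 0 := by
  have hest := h.estimate hδ hκ hL hadm
  obtain ⟨h0, hx, hy, hx2, hy2⟩ := isHamSol_zero_iff.1 h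
  rw [dotProduct_zero, mul_zero] at hest
  have hnn : 0 ≤ᵐ[volume.restrict (Set.Ici t)] fun s => x s ⬝ᵥ x s + y s ⬝ᵥ y s :=
    ae_of_all _ fun s => add_nonneg (dotProduct_self_nonneg' _) (dotProduct_self_nonneg' _)
  have hyt : y t ⬝ᵥ y t = 0 :=
    le_antisymm (by linarith [integral_nonneg_of_ae hnn]) (dotProduct_self_nonneg' _)
  have hint : ∫ s in Set.Ici t, (x s ⬝ᵥ x s + y s ⬝ᵥ y s) = 0 :=
    le_antisymm (by linarith) (integral_nonneg_of_ae hnn)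
  rw [integral_eq_zero_iff_of_nonneg_ae hnn
    ((integrable_dotProduct hx2 hx2).add (integrable_dotProduct hy2 hy2))] at hint
  have hae : ∀ᵐ s ∂(volume.restrict (Set.Ici t)), x s = 0 ∧ y s = 0 := by
    filter_upwards [hint] with s hs
    have hs' : x s ⬝ᵥ x s + y s ⬝ᵥ y s = 0 := hs
    have h1 := dotProduct_self_nonneg' (x s)
    have h2 := dotProduct_self_nonneg' (y s)
    exact ⟨dotProduct_self_eq_zero.1 (by linarith), dotProduct_self_eq_zero.1 (by linarith)⟩
  have hx0 : x s = 0 := by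
    ext i
    have h1 : IsPrim t (fun _ => 0) (fun s => x s i) := (hx i).congr_deriv <| by
      filter_upwards [hae] with r hr
      simp [hr.1, hr.2]
    have := h1.2 s hs
    simpa [h0] using this
  have hy0 : y s = 0 := by
    ext i
    have h1 : IsPrim t (fun _ => 0) (fun s => y s i) := (hy i).congr_deriv <| by
      filter_upwards [hae] with r hr
      simp [hr.1, hr.2]
    have := h1.2 s hs
    simpa [dotProduct_self_eq_zero.1 hyt] using this
  exact ⟨hx0, hy0⟩

lemma IsHamSol.unique {δ κ L : ℝ} (hδ : 0 < δ) (hκ : 0 < κ) (hL : 0 < L)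
    (hadm : ∀ᵐ s ∂(volume.restrict (Set.Ici t)), Admissible δ κ L (A s) (B s) (Q s) (R s))
    {xt : Fin n → ℝ} {x₁ y₁ x₂ y₂ : ℝ → Fin n → ℝ}
    (h₁ : IsHamSol t 0 A B Q R xt x₁ y₁) (h₂ : IsHamSol t 0 A B Q R xt x₂ y₂)
    {s : ℝ} (hs : t ≤ s) : x₁ s = x₂ s ∧ y₁ s = y₂ s := by
  have h := (h₁.sub_zero h₂).eq_zero hδ hκ hL hadm hs
  exact ⟨sub_eq_zero.1 h.1, sub_eq_zero.1 h.2⟩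

end Hamiltonian

section VectorL2

variable {p q : ℕ} {μ : Measure ℝ}

/-- The coordinate function of a square integrable vector field. -/
noncomputable def coords (F : Lp (EuclideanSpace ℝ (Fin p)) 2 μ) (s : ℝ) : Fin p → ℝ := (F s).ofLp

lemma memLp_coords (F : Lp (EuclideanSpace ℝ (Fin p)) 2 μ) (i : Fin p) :
    MemLp (fun s => coords F s i) 2 μ :=
  (Lp.memLp F).eval_piLp i

lemma coords_add (F G : Lp (EuclideanSpace ℝ (Fin p)) 2 μ) :
    coords (F + G) =ᵐ[μ] fun s => coords F s + coords G s := by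
  filter_upwards [Lp.coeFn_add F G] with s hs
  rw [coords, hs]
  rfl

lemma coords_smul (c : ℝ) (F : Lp (EuclideanSpace ℝ (Fin p)) 2 μ) :
    coords (c • F) =ᵐ[μ] fun s => c • coords F s := by
  filter_upwards [Lp.coeFn_smul c F] with s hs
  simp [coords, hs]

lemma coords_neg (F : Lp (EuclideanSpace ℝ (Fin p)) 2 μ) :
    coords (-F) =ᵐ[μ] fun s => -coords F s := by
  filter_upwards [Lp.coeFn_neg F] with s hs
  rw [coords, hs]
  rfl

lemma coords_injective {F G : Lp (EuclideanSpace ℝ (Fin p)) 2 μ} (h : coords F =ᵐ[μ] coords G) :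
    F = G := by
  refine Lp.ext ?_
  filter_upwards [h] with s hs
  exact WithLp.ofLp_injective 2 hs

lemma exists_coords_eq {f : ℝ → Fin p → ℝ} (hf : ∀ i, MemLp (fun s => f s i) 2 μ) :
    ∃ F : Lp (EuclideanSpace ℝ (Fin p)) 2 μ, coords F =ᵐ[μ] f := by
  have h : MemLp (fun s => (WithLp.toLp 2 (f s) : EuclideanSpace ℝ (Fin p))) 2 μ :=
    MemLp.of_eval_piLp hf
  refine ⟨h.toLp _, ?_⟩
  filter_upwards [h.coeFn_toLp] with s hs
  simp [coords, hs]

lemma inner_eq_integral_coords (F G : Lp (EuclideanSpace ℝ (Fin p)) 2 μ) :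
    inner ℝ F G = ∫ s, coords F s ⬝ᵥ coords G s ∂μ := by
  rw [L2.inner_def]
  refine integral_congr_ae (ae_of_all _ fun s => ?_)
  simp [coords, EuclideanSpace.inner_eq_star_dotProduct, dotProduct_comm]

lemma norm_sq_eq_integral_coords (F : Lp (EuclideanSpace ℝ (Fin p)) 2 μ) :
    ‖F‖ ^ 2 = ∫ s, coords F s ⬝ᵥ coords F s ∂μ := by
  rw [← inner_eq_integral_coords, real_inner_self_eq_norm_sq]

/-- A linear operation on square integrable vector fields that is bounded by `c` induces a
continuous linear map of norm at most `c`. -/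
lemma exists_continuousLinearMap_coords (T : (ℝ → Fin q → ℝ) → ℝ → Fin p → ℝ) {c : ℝ} (hc : 0 ≤ c)
    (hmem : ∀ f, (∀ i, MemLp (fun s => f s i) 2 μ) → ∀ i, MemLp (fun s => T f s i) 2 μ)
    (hcongr : ∀ f g, f =ᵐ[μ] g → T f =ᵐ[μ] T g)
    (hadd : ∀ f g, (∀ i, MemLp (fun s => f s i) 2 μ) → (∀ i, MemLp (fun s => g s i) 2 μ) →
      T (fun s => f s + g s) =ᵐ[μ] fun s => T f s + T g s)
    (hsmul : ∀ (a : ℝ) f, T (fun s => a • f s) =ᵐ[μ] fun s => a • T f s)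
    (hbd : ∀ f, (∀ i, MemLp (fun s => f s i) 2 μ) →
      ∫ s, T f s ⬝ᵥ T f s ∂μ ≤ c ^ 2 * ∫ s, f s ⬝ᵥ f s ∂μ) :
    ∃ op : Lp (EuclideanSpace ℝ (Fin q)) 2 μ →L[ℝ] Lp (EuclideanSpace ℝ (Fin p)) 2 μ,
      ‖op‖ ≤ c ∧ ∀ F, coords (op F) =ᵐ[μ] T (coords F) := by
  choose φ hφ using fun F : Lp (EuclideanSpace ℝ (Fin q)) 2 μ =>
    exists_coords_eq (hmem (coords F) (memLp_coords F))
  let l : Lp (EuclideanSpace ℝ (Fin q)) 2 μ →ₗ[ℝ] Lp (EuclideanSpace ℝ (Fin p)) 2 μ :=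
    { toFun := φ
      map_add' := fun F G => by
        refine coords_injective ?_
        filter_upwards [hφ (F + G), hcongr _ _ (coords_add F G),
          hadd _ _ (memLp_coords F) (memLp_coords G), coords_add (φ F) (φ G), hφ F, hφ G]
          with s h1 h2 h3 h4 h5 h6
        rw [h1, h2, h3, h4, h5, h6]
      map_smul' := fun a F => by
        refine coords_injective ?_
        filter_upwards [hφ (a • F), hcongr _ _ (coords_smul a F), hsmul a (coords F),
          coords_smul a (φ F), hφ F] with s h1 h2 h3 h4 h5
        rw [h1, h2, h3, RingHom.id_apply, h4, h5] }
  have hl : ∀ F, ‖l F‖ ≤ c * ‖F‖ := fun F => by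
    refine le_of_sq_le_sq ?_ (by positivity)
    rw [mul_pow, norm_sq_eq_integral_coords, norm_sq_eq_integral_coords]
    refine le_trans (le_of_eq (integral_congr_ae ?_)) (hbd (coords F) (memLp_coords F))
    filter_upwards [hφ F] with s hs
    change coords (φ F) s ⬝ᵥ coords (φ F) s = _
    rw [hs]
  exact ⟨l.mkContinuous c hl, l.mkContinuous_norm_le hc hl, hφ⟩

lemma coords_adjoint
    (op : Lp (EuclideanSpace ℝ (Fin q)) 2 μ →L[ℝ] Lp (EuclideanSpace ℝ (Fin p)) 2 μ)
    (G : Lp (EuclideanSpace ℝ (Fin p)) 2 μ) {w : ℝ → Fin q → ℝ}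
    (hw : ∀ i, MemLp (fun s => w s i) 2 μ)
    (h : ∀ F, ∫ s, coords (op F) s ⬝ᵥ coords G s ∂μ = ∫ s, coords F s ⬝ᵥ w s ∂μ) :
    coords (ContinuousLinearMap.adjoint op G) =ᵐ[μ] w := by
  obtain ⟨W, hW⟩ := exists_coords_eq hw
  have : ContinuousLinearMap.adjoint op G = W := by
    refine ext_inner_left ℝ fun F => ?_
    rw [ContinuousLinearMap.adjoint_inner_right, inner_eq_integral_coords,
      inner_eq_integral_coords, h]
    refine integral_congr_ae ?_
    filter_upwards [hW] with s hs
    rw [hs]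
  rwa [this]

lemma memLp_mulVec {M : ℝ → Matrix (Fin p) (Fin q) ℝ} (hM : ∀ i j, Measurable fun s => M s i j)
    {L : ℝ} (hL : ∀ᵐ s ∂μ, ∀ i j, |M s i j| ≤ L) {f : ℝ → Fin q → ℝ}
    (hf : ∀ i, MemLp (fun s => f s i) 2 μ) (i : Fin p) :
    MemLp (fun s => (M s *ᵥ f s) i) 2 μ := by
  have : ∀ j ∈ Finset.univ, MemLp (fun s => M s i j * f s j) 2 μ := fun j _ => by
    refine (hf j).of_le_mul (c := L) ((hM i j).aestronglyMeasurable.mul (hf j).1) ?_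
    filter_upwards [hL] with s hs
    rw [norm_mul]
    gcongr
    exact hs i j
  exact memLp_finsetSum _ this

lemma exists_mulVec_operator {M : ℝ → Matrix (Fin p) (Fin q) ℝ}
    (hM : ∀ i j, Measurable fun s => M s i j) {c : ℝ} (hc : 0 ≤ c)
    (hbd : ∀ᵐ s ∂μ, ∀ v, (M s *ᵥ v) ⬝ᵥ (M s *ᵥ v) ≤ c ^ 2 * (v ⬝ᵥ v)) :
    ∃ op : Lp (EuclideanSpace ℝ (Fin q)) 2 μ →L[ℝ] Lp (EuclideanSpace ℝ (Fin p)) 2 μ,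
      ‖op‖ ≤ c ∧ (∀ F, coords (op F) =ᵐ[μ] fun s => M s *ᵥ coords F s) ∧
      ∀ G, coords (ContinuousLinearMap.adjoint op G) =ᵐ[μ] fun s => (M s)ᵀ *ᵥ coords G s := by
  have hent : ∀ᵐ s ∂μ, ∀ i j, |M s i j| ≤ |c| := hbd.mono fun s hs => abs_entry_le hs
  obtain ⟨op, h1, h2⟩ := exists_continuousLinearMap_coords (μ := μ) (fun f s => M s *ᵥ f s) hc
    (fun f hf => memLp_mulVec hM hent hf)
    (fun f g hfg => hfg.mono fun s hs => by simp only [hs])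
    (fun f g _ _ => ae_of_all _ fun s => mulVec_add _ _ _)
    (fun a f => ae_of_all _ fun s => mulVec_smul _ _ _)
    (fun f hf => by
      rw [← integral_const_mul]
      exact integral_mono_ae (integrable_dotProduct (memLp_mulVec hM hent hf)
        (memLp_mulVec hM hent hf)) ((integrable_dotProduct hf hf).const_mul _)
        (hbd.mono fun s hs => hs _))
  refine ⟨op, h1, h2, fun G => coords_adjoint op G (memLp_mulVec (fun i j => hM j i)
    (hent.mono fun s hs i j => hs j i) (memLp_coords G)) fun F => integral_congr_ae ?_⟩
  filter_upwards [h2 F] with s hs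
  rw [hs, dotProduct_comm, ← transpose_mulVec_dotProduct, dotProduct_comm]

lemma integral_dotProduct_eq_sum {f g : ℝ → Fin p → ℝ} (hf : ∀ i, MemLp (fun s => f s i) 2 μ)
    (hg : ∀ i, MemLp (fun s => g s i) 2 μ) :
    ∫ s, f s ⬝ᵥ g s ∂μ = ∑ i, ∫ s, f s i * g s i ∂μ :=
  integral_finsetSum _ fun i _ => (hf i).integrable_mul (hg i)

end VectorL2

section Volterra

variable {p : ℕ} {t lam : ℝ}

lemma forwardSol_congr {f g : ℝ → ℝ} (h : f =ᵐ[volume.restrict (Set.Ici t)] g) {s : ℝ}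
    (hs : t ≤ s) : forwardSol t lam f s = forwardSol t lam g s := by
  simp only [forwardSol]
  congr 2
  rw [intervalIntegral.integral_of_le hs, intervalIntegral.integral_of_le hs]
  refine integral_congr_ae ?_
  filter_upwards [ae_restrict_of_ae_restrict_of_subset
    (Set.Ioc_subset_Icc_self.trans Set.Icc_subset_Ici_self) h] with r hr
  rw [hr]

lemma forwardSol_add {f g : ℝ → ℝ} (hf : MemLp f 2 (volume.restrict (Set.Ici t)))
    (hg : MemLp g 2 (volume.restrict (Set.Ici t))) {s : ℝ} (hs : t ≤ s) :
    forwardSol t lam (fun r => f r + g r) s = forwardSol t lam f s + forwardSol t lam g s := by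
  have key : ∀ {f : ℝ → ℝ}, MemLp f 2 (volume.restrict (Set.Ici t)) →
      IntervalIntegrable (fun r => Real.exp (lam * r) * f r) volume t s := fun {f} hf => by
    rw [intervalIntegrable_iff_integrableOn_Icc_of_le hs]
    exact (hf.integrableOn_Icc_of_two s).continuousOn_mul (by fun_prop) isCompact_Icc
  simp only [forwardSol, mul_add (Real.exp (lam * _))]
  rw [intervalIntegral.integral_add (key hf) (key hg)]
  ring

lemma forwardSol_const_mul (a : ℝ) (f : ℝ → ℝ) (s : ℝ) :
    forwardSol t lam (fun r => a * f r) s = a * forwardSol t lam f s := by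
  simp only [forwardSol, mul_left_comm _ a, intervalIntegral.integral_const_mul]
  ring

lemma exists_forwardSol_operator (t : ℝ) (p : ℕ) (hlam : 0 < lam) :
    ∃ J : Lp (EuclideanSpace ℝ (Fin p)) 2 (volume.restrict (Set.Ici t)) →L[ℝ]
        Lp (EuclideanSpace ℝ (Fin p)) 2 (volume.restrict (Set.Ici t)),
      ‖J‖ ≤ lam⁻¹ ∧
      (∀ F, coords (J F) =ᵐ[volume.restrict (Set.Ici t)]
        fun s i => forwardSol t lam (fun r => coords F r i) s) ∧
      ∀ G, coords (ContinuousLinearMap.adjoint J G) =ᵐ[volume.restrict (Set.Ici t)]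
        fun s i => backwardSol t lam (fun r => coords G r i) s := by
  have hmem : ∀ f : ℝ → Fin p → ℝ, (∀ i, MemLp (fun s => f s i) 2 (volume.restrict (Set.Ici t))) →
      ∀ i, MemLp (forwardSol t lam fun r => f r i) 2 (volume.restrict (Set.Ici t)) :=
    fun f hf i => (memLp_forwardSol hlam (hf i)).1
  obtain ⟨J, h1, h2⟩ := exists_continuousLinearMap_coords (μ := volume.restrict (Set.Ici t))
    (fun (f : ℝ → Fin p → ℝ) s i => forwardSol t lam (fun r => f r i) s) (inv_nonneg.2 hlam.le) hmem
    (fun f g hfg => by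
      filter_upwards [ae_restrict_mem measurableSet_Ici] with s hs
      funext i
      exact forwardSol_congr (hfg.mono fun r hr => by simp only [hr]) hs)
    (fun f g hf hg => by
      filter_upwards [ae_restrict_mem measurableSet_Ici] with s hs
      funext i
      exact forwardSol_add (hf i) (hg i) hs)
    (fun a f => ae_of_all _ fun s => funext fun i => forwardSol_const_mul a _ s)
    (fun f hf => by
      rw [integral_dotProduct_eq_sum (hmem f hf) (hmem f hf), integral_dotProduct_eq_sum hf hf,
        Finset.mul_sum]
      refine Finset.sum_le_sum fun i _ => ?_
      simpa only [sq] using (memLp_forwardSol hlam (hf i)).2)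
  refine ⟨J, h1, h2, fun G => coords_adjoint J G
    (fun i => memLp_backwardSol hlam (memLp_coords G i)) fun F => ?_⟩
  have h3 : ∫ s in Set.Ici t, coords (J F) s ⬝ᵥ coords G s =
      ∫ s in Set.Ici t, (fun i => forwardSol t lam (fun r => coords F r i) s) ⬝ᵥ coords G s :=
    integral_congr_ae ((h2 F).mono fun s hs => by simp only [hs])
  rw [h3, integral_dotProduct_eq_sum (hmem _ (memLp_coords F)) (memLp_coords G),
    integral_dotProduct_eq_sum (memLp_coords F)
      fun i => memLp_backwardSol hlam (memLp_coords G i)]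
  exact Finset.sum_congr rfl fun i _ =>
    integral_forwardSol_mul hlam (memLp_coords F i) (memLp_coords G i)

end Volterra

section Existence

variable {n m : ℕ} {t : ℝ} {A : ℝ → Matrix (Fin n) (Fin n) ℝ} {B : ℝ → Matrix (Fin n) (Fin m) ℝ}
  {Q : ℝ → Matrix (Fin n) (Fin n) ℝ} {R : ℝ → Matrix (Fin m) (Fin m) ℝ}

lemma shift_mulVec_dotProduct_self_le {κ L lam : ℝ} (hlam : 0 ≤ lam)
    {A : Matrix (Fin n) (Fin n) ℝ} (hbd : ∀ v, (A *ᵥ v) ⬝ᵥ (A *ᵥ v) ≤ L ^ 2 * (v ⬝ᵥ v))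
    (hdiss : ∀ v, (A *ᵥ v) ⬝ᵥ v ≤ -κ * (v ⬝ᵥ v)) (v : Fin n → ℝ) :
    ((A + lam • 1) *ᵥ v) ⬝ᵥ ((A + lam • 1) *ᵥ v) ≤
      √(L ^ 2 - 2 * lam * κ + lam ^ 2) ^ 2 * (v ⬝ᵥ v) := by
  have h1 := mul_le_mul_of_nonneg_left (hdiss v) hlam
  have h2 : ((A + lam • 1) *ᵥ v) ⬝ᵥ ((A + lam • 1) *ᵥ v) =
      (A *ᵥ v) ⬝ᵥ (A *ᵥ v) + 2 * (lam * ((A *ᵥ v) ⬝ᵥ v)) + lam ^ 2 * (v ⬝ᵥ v) := by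
    simp only [add_mulVec, smul_mulVec, one_mulVec, add_dotProduct, dotProduct_add,
      smul_dotProduct, dotProduct_smul, smul_eq_mul, dotProduct_comm v (A *ᵥ v)]
    ring
  have h3 : L ^ 2 - 2 * lam * κ + lam ^ 2 ≤ √(L ^ 2 - 2 * lam * κ + lam ^ 2) ^ 2 := by
    rw [Real.sq_sqrt']
    exact le_max_left _ _
  have h4 := mul_le_mul_of_nonneg_right h3 (dotProduct_self_nonneg' v)
  linarith [hbd v]

lemma exists_isHamSol_zero {δ κ L : ℝ} (hδ : 0 < δ) (hκ : 0 < κ) (hL : 0 < L)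
    (hA : ∀ i j, Measurable fun s => A s i j) (hB : ∀ i j, Measurable fun s => B s i j)
    (hQ : ∀ i j, Measurable fun s => Q s i j) (hR : ∀ i j, Measurable fun s => R s i j)
    (hadm : ∀ᵐ s ∂(volume.restrict (Set.Ici t)), Admissible δ κ L (A s) (B s) (Q s) (R s))
    (xt : Fin n → ℝ) : ∃ x y, IsHamSol t 0 A B Q R xt x y := by
  obtain ⟨lam, hlam, hlam'⟩ : ∃ lam : ℝ, 0 < lam ∧ L ^ 2 - 2 * lam * κ + lam ^ 2 < lam ^ 2 := by
    refine ⟨L ^ 2 / κ, by positivity, ?_⟩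
    have : 2 * (L ^ 2 / κ) * κ = 2 * L ^ 2 := by field_simp
    nlinarith
  have hM : ∀ i j, Measurable fun s => (A s + lam • (1 : Matrix (Fin n) (Fin n) ℝ)) i j :=
    fun i j => (hA i j).add_const _
  obtain ⟨J, hJ, hJf, hJb⟩ := exists_forwardSol_operator t n hlam
  obtain ⟨MM, hMn, hMf, hMb⟩ := exists_mulVec_operator hM (Real.sqrt_nonneg _)
    (hadm.mono fun s hs => shift_mulVec_dotProduct_self_le hlam.le hs.bound_A hs.dissipative_A)
  obtain ⟨BB, -, hBf, hBb⟩ := exists_mulVec_operator hB hL.le (hadm.mono fun s hs => hs.bound_B)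
  obtain ⟨QQ, -, hQf, -⟩ := exists_mulVec_operator hQ hL.le (hadm.mono fun s hs => hs.bound_Q)
  obtain ⟨RR, -, hRf, -⟩ := exists_mulVec_operator hR hL.le (hadm.mono fun s hs => hs.bound_R)
  have hJM : ‖J * MM‖ < 1 := by
    have h1 : ‖J * MM‖ ≤ lam⁻¹ * √(L ^ 2 - 2 * lam * κ + lam ^ 2) :=
      (norm_mul_le _ _).trans (mul_le_mul hJ hMn (norm_nonneg _) (inv_nonneg.2 hlam.le))
    refine h1.trans_lt ?_
    rw [inv_mul_lt_iff₀ hlam, mul_one, Real.sqrt_lt' hlam]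
    exact hlam'
  have hQpos : ∀ F, 0 ≤ inner ℝ (QQ F) F := fun F => by
    rw [inner_eq_integral_coords]
    refine integral_nonneg_of_ae ?_
    filter_upwards [hQf F, hadm] with s h1 h2
    rw [h1]
    exact h2.psd_Q _
  have hRpos : ∀ u, δ * ‖u‖ ^ 2 ≤ inner ℝ (RR u) u := fun u => by
    rw [inner_eq_integral_coords, norm_sq_eq_integral_coords, ← integral_const_mul]
    refine integral_mono_ae ((integrable_dotProduct (memLp_coords u) (memLp_coords u)).const_mul _)
      (integrable_dotProduct (memLp_coords _) (memLp_coords u)) ?_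
    filter_upwards [hRf u, hadm] with s h1 h2
    rw [h1]
    exact h2.coercive_R _
  obtain ⟨e, he⟩ := exists_coords_eq (p := n) (μ := volume.restrict (Set.Ici t))
    (f := fun s i => Real.exp (-lam * s) * (Real.exp (lam * t) * xt i))
    fun i => (memLp_exp t hlam).mul_const _
  obtain ⟨X, Y, u, hX, hY, hu⟩ := exists_optimality_system J MM QQ BB RR hδ hJM hQpos hRpos e
  set F := MM X + BB u
  set G := ContinuousLinearMap.adjoint MM Y + QQ X
  let x : ℝ → Fin n → ℝ := fun s i => Real.exp (-lam * s) * (Real.exp (lam * t) * xt i) +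
    forwardSol t lam (fun r => coords F r i) s
  let y : ℝ → Fin n → ℝ := fun s i => backwardSol t lam (fun r => coords G r i) s
  have hXx : coords X =ᵐ[volume.restrict (Set.Ici t)] x := by
    rw [hX]
    filter_upwards [coords_add (J F) e, hJf F, he] with s h1 h2 h3
    rw [h1, h2, h3, add_comm]
    rfl
  have hYy : coords Y =ᵐ[volume.restrict (Set.Ici t)] y := by
    rw [hY]
    exact hJb G
  have hF : ∀ᵐ s ∂(volume.restrict (Set.Ici t)), coords F s =
      (A s + lam • 1) *ᵥ x s - B s *ᵥ ((R s)⁻¹ *ᵥ ((B s)ᵀ *ᵥ y s)) := by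
    have hu' := hRf u
    rw [hu] at hu'
    filter_upwards [coords_add (MM X) (BB u), hMf X, hBf u, hXx, hYy, hu',
      coords_neg (ContinuousLinearMap.adjoint BB Y), hBb Y, hadm] with s h1 h2 h3 h4 h5 h6 h7 h8 h9
    have h10 : coords u s = -((R s)⁻¹ *ᵥ ((B s)ᵀ *ᵥ y s)) := by
      rw [h7, h8, h5] at h6
      rw [← mulVec_neg, h6, mulVec_mulVec,
        Matrix.nonsing_inv_mul _ (isUnit_det_of_coercive hδ h9.coercive_R), one_mulVec]
    rw [h1, h2, h3, h4, h10, mulVec_neg, sub_eq_add_neg]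
  have hG : ∀ᵐ s ∂(volume.restrict (Set.Ici t)), coords G s =
      (A s + lam • 1)ᵀ *ᵥ y s + Q s *ᵥ x s := by
    filter_upwards [coords_add (ContinuousLinearMap.adjoint MM Y) (QQ X), hMb Y, hQf X, hXx, hYy]
      with s h1 h2 h3 h4 h5
    rw [h1, h2, h3, h4, h5]
  refine ⟨x, y, isHamSol_zero_iff.2 ⟨?_, fun i => ?_, fun i => ?_, fun i => ?_, fun i => ?_⟩⟩
  · ext i
    simp only [x, forwardSol_self, ← mul_assoc, ← Real.exp_add]
    simp
  · refine ((((isPrim_exp t (-lam)).mul (IsPrim.const (Real.exp (lam * t) * xt i))).add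
      (isPrim_forwardSol (memLp_coords F i)))).congr_deriv ?_
    filter_upwards [hF] with s hs
    rw [hs]
    simp only [x, add_mulVec, smul_mulVec, one_mulVec, Pi.add_apply, Pi.sub_apply, Pi.smul_apply,
      smul_eq_mul]
    ring
  · refine (isPrim_backwardSol (memLp_coords G i)).congr_deriv ?_
    filter_upwards [hG] with s hs
    rw [hs]
    simp only [y, transpose_add, transpose_smul, transpose_one, add_mulVec, smul_mulVec,
      one_mulVec, Pi.add_apply, Pi.neg_apply, Pi.smul_apply, smul_eq_mul]
    ring
  · exact (memLp_congr_ae (hXx.mono fun s hs => by simp only [hs])).1 (memLp_coords X i)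
  · exact (memLp_congr_ae (hYy.mono fun s hs => by simp only [hs])).1 (memLp_coords Y i)

end Existence

lemma Admissible.shift {n m : ℕ} {δ κ K L : ℝ} (hK : 0 ≤ K) {A : Matrix (Fin n) (Fin n) ℝ}
    {B : Matrix (Fin n) (Fin m) ℝ} {Q : Matrix (Fin n) (Fin n) ℝ} {R : Matrix (Fin m) (Fin m) ℝ}
    (hQ : Qᵀ = Q) (hA : ∀ v, (A *ᵥ v) ⬝ᵥ (A *ᵥ v) ≤ L ^ 2 * (v ⬝ᵥ v))
    (hB : ∀ v, (B *ᵥ v) ⬝ᵥ (B *ᵥ v) ≤ L ^ 2 * (v ⬝ᵥ v))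
    (hQL : ∀ v, (Q *ᵥ v) ⬝ᵥ (Q *ᵥ v) ≤ L ^ 2 * (v ⬝ᵥ v))
    (hR : ∀ v, (R *ᵥ v) ⬝ᵥ (R *ᵥ v) ≤ L ^ 2 * (v ⬝ᵥ v)) (hpsd : ∀ v, 0 ≤ (Q *ᵥ v) ⬝ᵥ v)
    (hpd : ∀ v, δ * (v ⬝ᵥ v) ≤ (R *ᵥ v) ⬝ᵥ v)
    (hdiss : ∀ v, ((A + Aᵀ) *ᵥ v) ⬝ᵥ v ≤ -2 * κ * (v ⬝ᵥ v)) :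
    Admissible δ (κ - K) (2 * (|L| + K + 1)) (A + K • 1) B Q R := by
  have hle : 2 * L ^ 2 + 2 * K ^ 2 ≤ (2 * (|L| + K + 1)) ^ 2 := by
    nlinarith [abs_nonneg L, sq_abs L, mul_nonneg (abs_nonneg L) hK]
  have hmono : ∀ {a : ℝ} {k : ℕ} (v : Fin k → ℝ), a ≤ L ^ 2 * (v ⬝ᵥ v) →
      a ≤ (2 * (|L| + K + 1)) ^ 2 * (v ⬝ᵥ v) := fun v ha =>
    ha.trans (mul_le_mul_of_nonneg_right (by nlinarith [sq_nonneg L, sq_nonneg K])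
      (dotProduct_self_nonneg' v))
  refine ⟨hQ, fun v => ?_, fun v => hmono v (hB v), fun v => hmono v (hQL v),
    fun v => hmono v (hR v), hpsd, hpd, fun v => ?_⟩
  · have h1 := add_dotProduct_self_le (A *ᵥ v) (K • v)
    simp only [add_mulVec, smul_mulVec, one_mulVec]
    simp only [smul_dotProduct, dotProduct_smul, smul_eq_mul] at h1 ⊢
    have h2 := mul_le_mul_of_nonneg_right hle (dotProduct_self_nonneg' v)
    linarith [hA v]
  · have h1 := hdiss v
    rw [add_mulVec, add_dotProduct, transpose_mulVec_dotProduct, dotProduct_comm v] at h1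
    simp only [add_mulVec, smul_mulVec, one_mulVec, add_dotProduct, smul_dotProduct, smul_eq_mul]
    linarith

lemma stabilityConst_pos {δ κ L : ℝ} (hδ : 0 < δ) (hκ : 0 < κ) (hL : 0 < L) :
    0 < stabilityConst δ κ L := by
  rw [stabilityConst]
  positivity

/-- Deterministic version of Proposition 3.8: unique solvability in the
weighted space of the infinite-horizon Hamiltonian forward–backward system
(with vanishing cross weight `S`), together with the stability estimate
(3.22), for all weights `K ∈ [0, min(k,κ))` for some `k > 0`. -/
theorem stmt_9 (n m : ℕ) (t δ κ : ℝ) (ht : 0 ≤ t) (hδ : 0 < δ) (hκ : 0 < κ)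
    (A : ℝ → Matrix (Fin n) (Fin n) ℝ) (B : ℝ → Matrix (Fin n) (Fin m) ℝ)
    (Q : ℝ → Matrix (Fin n) (Fin n) ℝ) (R : ℝ → Matrix (Fin m) (Fin m) ℝ)
    (hA : ∀ i j, Measurable fun s => A s i j)
    (hB : ∀ i j, Measurable fun s => B s i j)
    (hQ : ∀ i j, Measurable fun s => Q s i j)
    (hR : ∀ i j, Measurable fun s => R s i j)
    (hQsym : ∀ᵐ s ∂(volume.restrict (Set.Ici t)), (Q s)ᵀ = Q s)
    (hRsym : ∀ᵐ s ∂(volume.restrict (Set.Ici t)), (R s)ᵀ = R s)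
    (hbd : ∃ L : ℝ, ∀ᵐ s ∂(volume.restrict (Set.Ici t)),
      (∀ v : Fin n → ℝ, (A s *ᵥ v) ⬝ᵥ (A s *ᵥ v) ≤ L^2 * (v ⬝ᵥ v)) ∧
      (∀ v : Fin m → ℝ, (B s *ᵥ v) ⬝ᵥ (B s *ᵥ v) ≤ L^2 * (v ⬝ᵥ v)) ∧
      (∀ v : Fin n → ℝ, (Q s *ᵥ v) ⬝ᵥ (Q s *ᵥ v) ≤ L^2 * (v ⬝ᵥ v)) ∧
      (∀ v : Fin m → ℝ, (R s *ᵥ v) ⬝ᵥ (R s *ᵥ v) ≤ L^2 * (v ⬝ᵥ v)))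
    (hQpsd : ∀ᵐ s ∂(volume.restrict (Set.Ici t)),
      ∀ v : Fin n → ℝ, 0 ≤ (Q s *ᵥ v) ⬝ᵥ v)
    (hRpd : ∀ᵐ s ∂(volume.restrict (Set.Ici t)),
      ∀ v : Fin m → ℝ, δ * (v ⬝ᵥ v) ≤ (R s *ᵥ v) ⬝ᵥ v)
    (hdiss : ∀ᵐ s ∂(volume.restrict (Set.Ici t)),
      ∀ v : Fin n → ℝ, ((A s + (A s)ᵀ) *ᵥ v) ⬝ᵥ v ≤ -2 * κ * (v ⬝ᵥ v)) :
    ∃ k > (0:ℝ), ∀ K : ℝ, 0 ≤ K → K < min k κ →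
      ∃ C > (0:ℝ), ∀ xt : Fin n → ℝ,
        (∃ x y : ℝ → (Fin n → ℝ), IsHamSol t K A B Q R xt x y) ∧
        (∀ x₁ y₁ x₂ y₂ : ℝ → (Fin n → ℝ),
          IsHamSol t K A B Q R xt x₁ y₁ → IsHamSol t K A B Q R xt x₂ y₂ →
          ∀ s, t ≤ s → x₁ s = x₂ s ∧ y₁ s = y₂ s) ∧
        (∀ x y : ℝ → (Fin n → ℝ), IsHamSol t K A B Q R xt x y →
          Real.exp (2*K*t) * (y t ⬝ᵥ y t)
            + ∫ s in Set.Ici t, Real.exp (2*K*s) * ((x s ⬝ᵥ x s) + (y s ⬝ᵥ y s))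
          ≤ C * (Real.exp (2*K*t) * (xt ⬝ᵥ xt))) := by
  obtain ⟨L, hL⟩ := hbd
  refine ⟨1, one_pos, fun K hK hKκ => ?_⟩
  have hκ' : 0 < κ - K := sub_pos.2 (hKκ.trans_le (min_le_right _ _))
  have hL' : 0 < 2 * (|L| + K + 1) := by positivity
  have hadm : ∀ᵐ s ∂(volume.restrict (Set.Ici t)),
      Admissible δ (κ - K) (2 * (|L| + K + 1)) (A s + K • 1) (B s) (Q s) (R s) := by
    filter_upwards [hQsym, hL, hQpsd, hRpd, hdiss] with s h1 ⟨h2, h3, h4, h5⟩ h6 h7 h8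
    exact Admissible.shift hK h1 h2 h3 h4 h5 h6 h7 h8
  have hAK : ∀ i j, Measurable fun s => (A s + K • (1 : Matrix (Fin n) (Fin n) ℝ)) i j :=
    fun i j => (hA i j).add_const _
  refine ⟨stabilityConst δ (κ - K) (2 * (|L| + K + 1)), stabilityConst_pos hδ hκ' hL',
    fun xt => ⟨?_, fun x₁ y₁ x₂ y₂ h₁ h₂ s hs => ?_, fun x y h => ?_⟩⟩
  · obtain ⟨x, y, h⟩ := exists_isHamSol_zero hδ hκ' hL' hAK hB hQ hR hadm (Real.exp (K * t) • xt)
    have h' := h.exp_smul (-K)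
    have hexp : Real.exp (-K * t) * Real.exp (K * t) = 1 := by
      rw [← Real.exp_add, neg_mul, neg_add_cancel, Real.exp_zero]
    simp only [zero_sub, neg_neg, add_assoc, ← add_smul, add_neg_cancel, zero_smul, add_zero,
      smul_smul, hexp, one_smul] at h'
    exact ⟨_, _, h'⟩
  · have h₁' := h₁.exp_smul K
    have h₂' := h₂.exp_smul K
    rw [sub_self] at h₁' h₂'
    have h := h₁'.unique hδ hκ' hL' hadm h₂' hs
    exact ⟨smul_right_injective _ (Real.exp_pos _).ne' h.1,
      smul_right_injective _ (Real.exp_pos _).ne' h.2⟩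
  · have h' := h.exp_smul K
    rw [sub_self] at h'
    have hest := h'.estimate hδ hκ' hL' hadm
    have hexp : ∀ s, Real.exp (2 * K * s) = Real.exp (K * s) * Real.exp (K * s) := fun s => by
      rw [← Real.exp_add]
      ring_nf
    simp only [smul_dotProduct, dotProduct_smul, smul_eq_mul, ← mul_assoc, ← hexp,
      ← mul_add] at hest
    rw [← mul_assoc]
    exact hest
end

section
/- Let n ∈ ℕ, t ≥ 0, κ₂ ∈ ℝ and K ∈ ℝ with K > −κ₂. Let φ : [t,∞) → ℝ^n be measurable with φ ∈ L^{2,K}(t,∞;ℝ^n). Then there exists a unique locally absolutely continuous y : [t,∞) → ℝ^n with y ∈ L^{2,K}(t,∞;ℝ^n) satisfying y'(s) = κ₂ y(s) − φ(s) for almost every s ≥ t, and it is given explicitly by y(s) = ∫_s^∞ e^{−κ₂(r−s)} φ(r) dr. -/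
open MeasureTheory Matrix

/-- `y` is a locally absolutely continuous solution, in the weighted space
`L^{2,K}(t,∞;ℝ^n)`, of the backward equation `y' = κ₂ y - φ` on `[t,∞)`. -/
def IsBwdSol (t K κ₂ : ℝ) {n : ℕ} (φ y : ℝ → (Fin n → ℝ)) : Prop :=
  (∀ T, t ≤ T →
    MeasureTheory.IntegrableOn (fun s => κ₂ • y s - φ s) (Set.Icc t T)) ∧
  (∀ s, t ≤ s → y s = y t + ∫ r in t..s, (κ₂ • y r - φ r)) ∧
  MeasureTheory.IntegrableOn (fun s => Real.exp (2*K*s) * (y s ⬝ᵥ y s)) (Set.Ici t)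

/-- The decaying solution `s ↦ ∫_s^∞ e^{-κ(r-s)} f(r) dr` of `y' = κ y - f`. -/
noncomputable def tailIntegral (κ : ℝ) (f : ℝ → ℝ) (s : ℝ) : ℝ :=
  ∫ r in Set.Ici s, Real.exp (-κ * (r - s)) * f r

lemma exp_neg_mul_sub (κ r s : ℝ) :
    Real.exp (-κ * (r - s)) = Real.exp (κ * s) * Real.exp (-κ * r) := by
  rw [← Real.exp_add]; ring_nf

lemma intervalIntegrable_of_Ici {f : ℝ → ℝ} {t s : ℝ} (hf : IntegrableOn f (Set.Ici t))
    (hs : t ≤ s) : IntervalIntegrable f volume t s :=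
  (intervalIntegrable_iff_integrableOn_Icc_of_le hs).2 (hf.mono_set Set.Icc_subset_Ici_self)

lemma tailIntegral_eq {κ t s : ℝ} {f : ℝ → ℝ}
    (hf : IntegrableOn (fun r => Real.exp (-κ * r) * f r) (Set.Ici t)) (hs : t ≤ s) :
    tailIntegral κ f s = Real.exp (κ * s) *
      (tailIntegral κ f t * Real.exp (-κ * t) - ∫ r in t..s, Real.exp (-κ * r) * f r) := by
  have key (u : ℝ) : tailIntegral κ f u =
      Real.exp (κ * u) * ∫ r in Set.Ioi u, Real.exp (-κ * r) * f r := by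
    simp only [tailIntegral, exp_neg_mul_sub, mul_assoc, integral_const_mul,
      integral_Ici_eq_integral_Ioi]
  have hsplit := intervalIntegral.integral_interval_add_Ioi
    (hf.mono_set Set.Ioi_subset_Ici_self)
    (hf.mono_set ((Set.Ioi_subset_Ioi hs).trans Set.Ioi_subset_Ici_self))
  rw [key s, key t, ← hsplit, mul_right_comm, ← Real.exp_add]
  simp

lemma continuousOn_intervalIntegral_Ici {f : ℝ → ℝ} {t : ℝ}
    (hf : ∀ T, t ≤ T → IntegrableOn f (Set.Icc t T)) :
    ContinuousOn (fun s => ∫ r in t..s, f r) (Set.Ici t) := by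
  intro s hs
  have hc : ContinuousOn (fun s => ∫ r in t..s, f r) (Set.Icc t (s + 1)) := by
    have hs' : t ≤ s + 1 := by linarith [Set.mem_Ici.1 hs]
    have := intervalIntegral.continuousOn_primitive_interval (a := t) (b := s + 1) (f := f)
      (μ := volume) (by rw [Set.uIcc_of_le hs']; exact hf _ hs')
    rwa [Set.uIcc_of_le hs'] at this
  refine (hc s ⟨hs, by linarith⟩).mono_of_mem_nhdsWithin ?_
  exact mem_nhdsWithin.2 ⟨Set.Iio (s + 1), isOpen_Iio, by simp, fun x hx => ⟨hx.2, hx.1.le⟩⟩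

lemma continuousOn_tailIntegral {κ t : ℝ} {f : ℝ → ℝ}
    (hf : IntegrableOn (fun r => Real.exp (-κ * r) * f r) (Set.Ici t)) :
    ContinuousOn (tailIntegral κ f) (Set.Ici t) := by
  have h := continuousOn_intervalIntegral_Ici
    (fun T _ => hf.mono_set (Set.Icc_subset_Ici_self : Set.Icc t T ⊆ _))
  refine ContinuousOn.congr (f := fun s => Real.exp (κ * s) *
      (tailIntegral κ f t * Real.exp (-κ * t) - ∫ r in t..s, Real.exp (-κ * r) * f r)) ?_
      (fun s hs => tailIntegral_eq hf hs)
  exact (by fun_prop : Continuous fun s => Real.exp (κ * s)).continuousOn.mul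
    (continuousOn_const.sub h)

/-- The tail integral solves `y' = κ y - f` in integrated form. -/
lemma tailIntegral_eq_add_integral {κ t s : ℝ} {f : ℝ → ℝ}
    (hf : IntegrableOn (fun r => Real.exp (-κ * r) * f r) (Set.Ici t)) (hs : t ≤ s) :
    tailIntegral κ f s = tailIntegral κ f t + ∫ r in t..s, (κ * tailIntegral κ f r - f r) := by
  set C := tailIntegral κ f t * Real.exp (-κ * t)
  set G : ℝ → ℝ := fun s => C - ∫ r in t..s, Real.exp (-κ * r) * f r
  have hint := intervalIntegrable_of_Ici hf hs
  have hE : AbsolutelyContinuousOnInterval (fun s => Real.exp (κ * s)) t s :=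
    ContDiffOn.absolutelyContinuousOnInterval (by fun_prop)
  have hGac : AbsolutelyContinuousOnInterval G t s :=
    AbsolutelyContinuousOnInterval.sub
      (ContDiffOn.absolutelyContinuousOnInterval contDiffOn_const)
      (hint.absolutelyContinuousOnInterval_intervalIntegral (c := t) (by simp))
  have hprod := hE.integral_deriv_mul_eq_sub hGac
  have hval : ∀ u, t ≤ u → tailIntegral κ f u = Real.exp (κ * u) * G u :=
    fun u hu => tailIntegral_eq hf hu
  rw [← hval s hs, ← hval t le_rfl] at hprod
  rw [← sub_eq_iff_eq_add', ← hprod]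
  apply intervalIntegral.integral_congr_ae
  filter_upwards [hint.ae_hasDerivAt_integral] with x hx hxm
  have hxd := (hx (Set.uIoc_subset_uIcc hxm) t (by simp)).const_sub C
  have hxe : HasDerivAt (fun s => Real.exp (κ * s)) (Real.exp (κ * x) * κ) x := by
    simpa using ((hasDerivAt_id x).const_mul κ).exp
  rw [Set.uIoc_of_le hs] at hxm
  have h1 : Real.exp (κ * x) * Real.exp (-κ * x) = 1 := by rw [← Real.exp_add]; simp
  rw [hxe.deriv, hxd.deriv, hval x hxm.1.le]
  linear_combination (-f x) * h1

lemma integrableOn_exp_neg_mul_Ici {δ : ℝ} (hδ : 0 < δ) (t : ℝ) :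
    IntegrableOn (fun r => Real.exp (-δ * r)) (Set.Ici t) :=
  (integrableOn_Ici_iff_integrableOn_Ioi).2 (integrableOn_exp_mul_Ioi (by linarith) t)

lemma integrableOn_exp_neg_mul_mul_of_sq {δ t : ℝ} {ψ : ℝ → ℝ} (hδ : 0 < δ) (hψ : Measurable ψ)
    (hψ2 : IntegrableOn (fun r => ψ r ^ 2) (Set.Ici t)) :
    IntegrableOn (fun r => Real.exp (-δ * r) * ψ r) (Set.Ici t) := by
  have h1 := integrableOn_exp_neg_mul_Ici (δ := 2 * δ) (by linarith) t
  refine Integrable.mono' (h1.add hψ2) (by fun_prop) (ae_of_all _ fun r => ?_)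
  have h2 : Real.exp (-(2 * δ) * r) = Real.exp (-δ * r) ^ 2 := by
    rw [← Real.exp_nat_mul]; push_cast; ring_nf
  simp only [Pi.add_apply, h2, Real.norm_eq_abs, abs_le]
  constructor <;> nlinarith [sq_nonneg (Real.exp (-δ * r) + ψ r),
    sq_nonneg (Real.exp (-δ * r) - ψ r), sq_nonneg (Real.exp (-δ * r)), sq_nonneg (ψ r)]

lemma integrableOn_exp_neg_mul_mul {δ t : ℝ} {f : ℝ → ℝ} (hδ : 0 < δ)
    (hf : IntegrableOn f (Set.Ici t)) :
    IntegrableOn (fun r => Real.exp (-δ * r) * f r) (Set.Ici t) := by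
  refine Integrable.bdd_mul (c := Real.exp (-δ * t)) hf (by fun_prop) ?_
  filter_upwards [ae_restrict_mem measurableSet_Ici] with r hr
  rw [Real.norm_eq_abs, Real.abs_exp, Real.exp_le_exp]
  nlinarith [Set.mem_Ici.1 hr]

lemma integrableOn_exp_neg_mul_sub_mul {κ t : ℝ} {f : ℝ → ℝ}
    (hf : IntegrableOn (fun r => Real.exp (-κ * r) * f r) (Set.Ici t)) {s : ℝ} (hs : t ≤ s) :
    IntegrableOn (fun r => Real.exp (-κ * (r - s)) * f r) (Set.Ici s) := by
  simp only [exp_neg_mul_sub, mul_assoc]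
  exact (hf.mono_set (Set.Ici_subset_Ici.2 hs)).const_mul _

lemma tailIntegral_nonneg {κ s : ℝ} {f : ℝ → ℝ} (hf : 0 ≤ f) : 0 ≤ tailIntegral κ f s :=
  integral_nonneg fun r => mul_nonneg (Real.exp_nonneg _) (hf r)

lemma tailIntegral_le {δ t : ℝ} {f : ℝ → ℝ} (hδ : 0 < δ) (hf0 : 0 ≤ f)
    (hf : IntegrableOn f (Set.Ici t)) :
    tailIntegral δ f t ≤ ∫ r in Set.Ici t, f r := by
  refine setIntegral_mono_on
    (integrableOn_exp_neg_mul_sub_mul (integrableOn_exp_neg_mul_mul hδ hf) le_rfl) hf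
    measurableSet_Ici fun r hr => ?_
  refine mul_le_of_le_one_left (hf0 r) (Real.exp_le_one_iff.2 ?_)
  nlinarith [Set.mem_Ici.1 hr]

lemma integrableOn_tailIntegral {δ t : ℝ} {f : ℝ → ℝ} (hδ : 0 < δ) (hf0 : 0 ≤ f)
    (hf : IntegrableOn f (Set.Ici t)) : IntegrableOn (tailIntegral δ f) (Set.Ici t) := by
  have hw := integrableOn_exp_neg_mul_mul hδ hf
  have hcont := continuousOn_tailIntegral hw
  rw [integrableOn_Ici_iff_integrableOn_Ioi]
  refine integrableOn_Ioi_of_intervalIntegral_norm_bounded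
    (δ⁻¹ * ∫ r in Set.Ici t, f r) t (b := id) (l := Filter.atTop) (fun T => ?_)
    Filter.tendsto_id ?_
  · exact ((hcont.mono Set.Icc_subset_Ici_self).integrableOn_Icc).mono_set Set.Ioc_subset_Icc_self
  · filter_upwards [Filter.eventually_ge_atTop t] with T hT
    have hT' : t ≤ T := hT
    have hsol := tailIntegral_eq_add_integral hw hT'
    have hYint : IntervalIntegrable (tailIntegral δ f) volume t T :=
      (hcont.mono (by rw [Set.uIcc_of_le hT']; exact Set.Icc_subset_Ici_self)).intervalIntegrable
    rw [intervalIntegral.integral_sub (hYint.const_mul δ) (intervalIntegrable_of_Ici hf hT'),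
      intervalIntegral.integral_const_mul] at hsol
    have hsplit := intervalIntegral.integral_interval_add_Ioi
      (hf.mono_set Set.Ioi_subset_Ici_self)
      (hf.mono_set ((Set.Ioi_subset_Ioi hT').trans Set.Ioi_subset_Ici_self))
    have hle := tailIntegral_le hδ hf0 (hf.mono_set (Set.Ici_subset_Ici.2 hT'))
    rw [integral_Ici_eq_integral_Ioi] at hle
    have h0 : 0 ≤ tailIntegral δ f t := tailIntegral_nonneg hf0
    simp only [Real.norm_of_nonneg (tailIntegral_nonneg hf0), id]
    rw [integral_Ici_eq_integral_Ioi, le_inv_mul_iff₀ hδ]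
    linarith

lemma integral_exp_neg_mul_sub {δ : ℝ} (hδ : 0 < δ) (s : ℝ) :
    ∫ r in Set.Ici s, Real.exp (-δ * (r - s)) = δ⁻¹ := by
  simp only [exp_neg_mul_sub, integral_const_mul, integral_Ici_eq_integral_Ioi]
  rw [integral_exp_mul_Ioi (by linarith), mul_div_assoc', mul_neg, ← Real.exp_add]
  simp

/-- Cauchy–Schwarz for the exponential kernel. -/
lemma mul_tailIntegral_sq_le {δ t : ℝ} {ψ : ℝ → ℝ} (hδ : 0 < δ) (hψ : Measurable ψ)
    (hψ2 : IntegrableOn (fun r => ψ r ^ 2) (Set.Ici t)) :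
    δ * tailIntegral δ ψ t ^ 2 ≤ tailIntegral δ (fun r => ψ r ^ 2) t := by
  set c := δ * tailIntegral δ ψ t with hc
  have h2 := integrableOn_exp_neg_mul_sub_mul (integrableOn_exp_neg_mul_mul hδ hψ2) le_rfl
  have h1 := integrableOn_exp_neg_mul_sub_mul
    (integrableOn_exp_neg_mul_mul_of_sq hδ hψ hψ2) le_rfl
  have h0 : IntegrableOn (fun r => Real.exp (-δ * (r - t))) (Set.Ici t) := by
    simp only [exp_neg_mul_sub]
    exact (integrableOn_exp_neg_mul_Ici hδ t).const_mul _
  have hnn : 0 ≤ ∫ r in Set.Ici t, (Real.exp (-δ * (r - t)) * ψ r ^ 2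
      - 2 * c * (Real.exp (-δ * (r - t)) * ψ r) + c ^ 2 * Real.exp (-δ * (r - t))) :=
    integral_nonneg fun r => by
      have := mul_nonneg (Real.exp_nonneg (-δ * (r - t))) (sq_nonneg (ψ r - c))
      simp only [Pi.zero_apply]
      linarith
  have h21 : IntegrableOn (fun r => Real.exp (-δ * (r - t)) * ψ r ^ 2
      - 2 * c * (Real.exp (-δ * (r - t)) * ψ r)) (Set.Ici t) := h2.sub (h1.const_mul _)
  rw [integral_add h21 (h0.const_mul _), integral_sub h2 (h1.const_mul _), integral_const_mul,
    integral_const_mul, integral_exp_neg_mul_sub hδ] at hnn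
  change 0 ≤ tailIntegral δ (fun r => ψ r ^ 2) t - 2 * c * tailIntegral δ ψ t + c ^ 2 * δ⁻¹ at hnn
  have : c ^ 2 * δ⁻¹ = δ * tailIntegral δ ψ t ^ 2 := by rw [hc]; field_simp
  rw [this, hc] at hnn
  linarith

lemma integrableOn_tailIntegral_sq {δ t : ℝ} {ψ : ℝ → ℝ} (hδ : 0 < δ) (hψ : Measurable ψ)
    (hψ2 : IntegrableOn (fun r => ψ r ^ 2) (Set.Ici t)) :
    IntegrableOn (fun s => tailIntegral δ ψ s ^ 2) (Set.Ici t) := by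
  have hF := integrableOn_tailIntegral hδ (fun r => sq_nonneg (ψ r)) hψ2
  refine Integrable.mono' (hF.const_mul δ⁻¹)
    (((continuousOn_tailIntegral (integrableOn_exp_neg_mul_mul_of_sq hδ hψ hψ2)).pow
      2).aestronglyMeasurable measurableSet_Ici) ?_
  filter_upwards [ae_restrict_mem measurableSet_Ici] with s hs
  rw [Real.norm_of_nonneg (sq_nonneg _), le_inv_mul_iff₀ hδ]
  exact mul_tailIntegral_sq_le hδ hψ (hψ2.mono_set (Set.Ici_subset_Ici.2 hs))

lemma exp_two_mul (K s : ℝ) : Real.exp (2 * K * s) = Real.exp (K * s) ^ 2 := by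
  rw [← Real.exp_nat_mul]; push_cast; ring_nf

lemma exp_mul_tailIntegral (κ K : ℝ) (f : ℝ → ℝ) (s : ℝ) :
    Real.exp (K * s) * tailIntegral κ f s =
      tailIntegral (κ + K) (fun r => Real.exp (K * r) * f r) s := by
  simp only [tailIntegral, ← integral_const_mul]
  congr 1 with r
  rw [← mul_assoc, ← mul_assoc, ← Real.exp_add, ← Real.exp_add]
  ring_nf

lemma integrableOn_exp_neg_mul_mul_of_weighted {κ K t : ℝ} {f : ℝ → ℝ} (hK : -κ < K)
    (hf : Measurable f)
    (hf2 : IntegrableOn (fun s => Real.exp (2 * K * s) * f s ^ 2) (Set.Ici t)) :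
    IntegrableOn (fun r => Real.exp (-κ * r) * f r) (Set.Ici t) := by
  simp only [exp_two_mul, ← mul_pow] at hf2
  have := integrableOn_exp_neg_mul_mul_of_sq (δ := κ + K) (by linarith) (by fun_prop) hf2
  refine this.congr_fun (fun r _ => ?_) measurableSet_Ici
  simp only [← mul_assoc, ← Real.exp_add]
  ring_nf

lemma integrableOn_weighted_tailIntegral_sq {κ K t : ℝ} {f : ℝ → ℝ} (hK : -κ < K)
    (hf : Measurable f)
    (hf2 : IntegrableOn (fun s => Real.exp (2 * K * s) * f s ^ 2) (Set.Ici t)) :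
    IntegrableOn (fun s => Real.exp (2 * K * s) * tailIntegral κ f s ^ 2) (Set.Ici t) := by
  simp only [exp_two_mul, ← mul_pow, exp_mul_tailIntegral] at hf2 ⊢
  exact integrableOn_tailIntegral_sq (by linarith) (by fun_prop) hf2

/-- An integrated solution of `w' = κ w` is an exponential. -/
lemma eq_exp_of_eq_add_integral {κ t : ℝ} {w : ℝ → ℝ}
    (hint : ∀ T, t ≤ T → IntegrableOn (fun s => κ * w s) (Set.Icc t T))
    (hw : ∀ s, t ≤ s → w s = w t + ∫ r in t..s, κ * w r) {s : ℝ} (hs : t ≤ s) :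
    w s = Real.exp (κ * (s - t)) * w t := by
  have hI : IntervalIntegrable (fun s => κ * w s) volume t s :=
    (intervalIntegrable_iff_integrableOn_Icc_of_le hs).2 (hint s hs)
  set W : ℝ → ℝ := fun s => w t + ∫ r in t..s, κ * w r
  have hWac : AbsolutelyContinuousOnInterval W t s :=
    AbsolutelyContinuousOnInterval.add
      (ContDiffOn.absolutelyContinuousOnInterval contDiffOn_const)
      (hI.absolutelyContinuousOnInterval_intervalIntegral (c := t) (by simp))
  have hE : AbsolutelyContinuousOnInterval (fun s => Real.exp (-κ * s)) t s :=
    ContDiffOn.absolutelyContinuousOnInterval (by fun_prop)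
  obtain ⟨C, hC⟩ := (hE.mul hWac).const_of_ae_hasDerivAt_zero (by
    filter_upwards [hI.ae_hasDerivAt_integral] with x hx hxm
    have hxd := (hx hxm t (by simp)).const_add (w t)
    have hxe : HasDerivAt (fun s => Real.exp (-κ * s)) (Real.exp (-κ * x) * -κ) x := by
      simpa using ((hasDerivAt_id x).const_mul (-κ)).exp
    rw [Set.uIcc_of_le hs] at hxm
    have hxW : W x = w x := (hw x hxm.1).symm
    have h0 : Real.exp (-κ * x) * -κ * W x + Real.exp (-κ * x) * (κ * w x) = 0 := by
      rw [hxW]; ring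
    exact h0 ▸ hxe.mul hxd)
  have hCs := hC s (by simp)
  have hCt := hC t (by simp)
  have hst : Real.exp (-κ * s) * w s = Real.exp (-κ * t) * w t := by
    have h1 : W s = w s := (hw s hs).symm
    have h2 : W t = w t := (hw t le_rfl).symm
    rw [← h1, ← h2]
    exact hCs.trans hCt.symm
  have h1 : Real.exp (κ * s) * Real.exp (-κ * s) = 1 := by rw [← Real.exp_add]; simp
  have h2 : Real.exp (κ * (s - t)) = Real.exp (κ * s) * Real.exp (-κ * t) := by
    rw [← Real.exp_add]; ring_nf
  rw [h2, mul_assoc, ← hst, ← mul_assoc, h1, one_mul]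

/-- The only integrated solution of `w' = κ w` in the weighted space is zero. -/
lemma eq_zero_of_eq_add_integral {κ K t : ℝ} {w : ℝ → ℝ} (hK : -κ < K)
    (hint : ∀ T, t ≤ T → IntegrableOn (fun s => κ * w s) (Set.Icc t T))
    (hw : ∀ s, t ≤ s → w s = w t + ∫ r in t..s, κ * w r)
    (hw2 : IntegrableOn (fun s => Real.exp (2 * K * s) * w s ^ 2) (Set.Ici t)) {s : ℝ}
    (hs : t ≤ s) : w s = 0 := by
  have hconst : IntegrableOn (fun _ => Real.exp (2 * K * t) * w t ^ 2) (Set.Ici t) := by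
    refine Integrable.mono' hw2 (by fun_prop) ?_
    filter_upwards [ae_restrict_mem measurableSet_Ici] with r hr
    rw [Real.norm_of_nonneg (by positivity), eq_exp_of_eq_add_integral hint hw hr, mul_pow,
      ← mul_assoc, ← exp_two_mul, ← Real.exp_add]
    gcongr
    nlinarith [Set.mem_Ici.1 hr]
  have h0 : Real.exp (2 * K * t) * w t ^ 2 = 0 := by
    simpa using (integrableOn_const_iff enorm_ne_top).1 hconst
  have hwt : w t = 0 := by simpa [Real.exp_ne_zero] using h0
  rw [eq_exp_of_eq_add_integral hint hw hs, hwt, mul_zero]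

lemma integrableOn_weighted_dotProduct_iff {n : ℕ} {t K : ℝ} {f : ℝ → Fin n → ℝ}
    (hf : AEStronglyMeasurable f (volume.restrict (Set.Ici t))) :
    IntegrableOn (fun s => Real.exp (2 * K * s) * (f s ⬝ᵥ f s)) (Set.Ici t) ↔
      ∀ i, IntegrableOn (fun s => Real.exp (2 * K * s) * f s i ^ 2) (Set.Ici t) := by
  simp only [dotProduct, Finset.mul_sum, ← pow_two]
  refine ⟨fun h i => ?_, fun h => integrable_finsetSum _ fun i _ => h i⟩
  have hfi : AEStronglyMeasurable (fun s => f s i) (volume.restrict (Set.Ici t)) :=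
    (continuous_apply i).comp_aestronglyMeasurable hf
  refine Integrable.mono' h (by fun_prop) (ae_of_all _ fun s => ?_)
  rw [Real.norm_of_nonneg (by positivity)]
  exact Finset.single_le_sum (f := fun i => Real.exp (2 * K * s) * f s i ^ 2)
    (fun j _ => by positivity) (Finset.mem_univ i)

lemma intervalIntegral_apply {n : ℕ} {a b : ℝ} {f : ℝ → Fin n → ℝ} (hab : a ≤ b)
    (hf : IntegrableOn f (Set.Icc a b)) (i : Fin n) :
    (∫ r in a..b, f r) i = ∫ r in a..b, f r i := by
  rw [intervalIntegral.integral_of_le hab, intervalIntegral.integral_of_le hab]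
  exact eval_integral (fun j => (hf.mono_set Set.Ioc_subset_Icc_self).eval j) i

lemma integrableOn_Icc_of_continuousOn_Ici {f : ℝ → ℝ} {t : ℝ} (hf : ContinuousOn f (Set.Ici t))
    (T : ℝ) : IntegrableOn f (Set.Icc t T) :=
  (hf.mono Set.Icc_subset_Ici_self).integrableOn_Icc

lemma IsBwdSol.continuousOn_apply {t K κ₂ : ℝ} {n : ℕ} {φ y : ℝ → Fin n → ℝ}
    (h : IsBwdSol t K κ₂ φ y) (i : Fin n) : ContinuousOn (fun s => y s i) (Set.Ici t) := by
  refine (continuousOn_const.add (continuousOn_intervalIntegral_Ici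
    fun T hT => (h.1 T hT).eval i)).congr (f := fun s => y t i + _) fun s hs => ?_
  conv_lhs => rw [h.2.1 s hs]
  rw [Pi.add_apply, intervalIntegral_apply hs (h.1 s hs)]

lemma IsBwdSol.integrableOn_apply {t K κ₂ : ℝ} {n : ℕ} {φ y : ℝ → Fin n → ℝ}
    (h : IsBwdSol t K κ₂ φ y) (i : Fin n) :
    IntegrableOn (fun s => Real.exp (2 * K * s) * y s i ^ 2) (Set.Ici t) :=
  (integrableOn_weighted_dotProduct_iff ((continuousOn_pi.2
    h.continuousOn_apply).aestronglyMeasurable measurableSet_Ici)).1 h.2.2 i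

lemma IsBwdSol.eqOn {t K κ₂ : ℝ} {n : ℕ} {φ y z : ℝ → Fin n → ℝ} (hK : -κ₂ < K)
    (hz : IsBwdSol t K κ₂ φ z) (hy : IsBwdSol t K κ₂ φ y) {s : ℝ} (hs : t ≤ s) : z s = y s := by
  ext i
  have hcont := (hz.continuousOn_apply i).sub (hy.continuousOn_apply i)
  refine sub_eq_zero.1 (eq_zero_of_eq_add_integral (w := fun s => z s i - y s i) hK
    (fun T _ => (integrableOn_Icc_of_continuousOn_Ici hcont T).const_mul κ₂) (fun u hu => ?_) ?_ hs)
  · conv_lhs => rw [hz.2.1 u hu, hy.2.1 u hu]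
    have hzi := (hz.1 u hu).eval i
    have hyi := (hy.1 u hu).eval i
    rw [Pi.add_apply, Pi.add_apply, intervalIntegral_apply hu (hz.1 u hu),
      intervalIntegral_apply hu (hy.1 u hu), add_sub_add_comm, ← intervalIntegral.integral_sub
        ((intervalIntegrable_iff_integrableOn_Icc_of_le hu).2 hzi)
        ((intervalIntegrable_iff_integrableOn_Icc_of_le hu).2 hyi)]
    congr 2 with r
    simp only [Pi.sub_apply, Pi.smul_apply, smul_eq_mul]
    ring
  · refine Integrable.mono' (((hz.integrableOn_apply i).add (hy.integrableOn_apply i)).const_mul 2)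
      (((by fun_prop : Continuous fun s => Real.exp (2 * K * s)).continuousOn.mul
        (hcont.pow 2)).aestronglyMeasurable measurableSet_Ici) (ae_of_all _ fun r => ?_)
    rw [Real.norm_of_nonneg (by positivity), Pi.add_apply]
    nlinarith [mul_nonneg (Real.exp_nonneg (2 * K * r)) (sq_nonneg (z r i + y r i))]

lemma isBwdSol_tailIntegral {t K κ₂ : ℝ} {n : ℕ} {φ : ℝ → Fin n → ℝ} (hK : -κ₂ < K)
    (hφ : Measurable φ)
    (hφ2 : ∀ i, IntegrableOn (fun s => Real.exp (2 * K * s) * φ s i ^ 2) (Set.Ici t)) :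
    IsBwdSol t K κ₂ φ (fun s i => tailIntegral κ₂ (fun r => φ r i) s) := by
  have hφi (i : Fin n) : Measurable fun r => φ r i := (measurable_pi_apply i).comp hφ
  have hw (i : Fin n) := integrableOn_exp_neg_mul_mul_of_weighted hK (hφi i) (hφ2 i)
  have hcont (i : Fin n) := continuousOn_tailIntegral (hw i)
  have hloc (i : Fin n) (T : ℝ) : IntegrableOn (fun r => φ r i) (Set.Icc t T) := by
    have h := ((hw i).mono_set (Set.Icc_subset_Ici_self : Set.Icc t T ⊆ _)).continuousOn_mul
      (g := fun r => Real.exp (κ₂ * r)) (by fun_prop) isCompact_Icc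
    refine h.congr_fun (fun r _ => ?_) measurableSet_Icc
    simp only [← mul_assoc, ← Real.exp_add]
    simp
  have hint (T : ℝ) : IntegrableOn
      (fun s => κ₂ • (fun i => tailIntegral κ₂ (fun r => φ r i) s) - φ s) (Set.Icc t T) :=
    Integrable.of_eval fun i =>
      ((integrableOn_Icc_of_continuousOn_Ici (hcont i) T).const_mul κ₂).sub (hloc i T)
  refine ⟨fun T _ => hint T, fun s hs => ?_, ?_⟩
  · ext i
    rw [Pi.add_apply, intervalIntegral_apply hs (hint s)]
    exact tailIntegral_eq_add_integral (hw i) hs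
  · exact (integrableOn_weighted_dotProduct_iff
      ((continuousOn_pi.2 hcont).aestronglyMeasurable measurableSet_Ici)).2
      fun i => integrableOn_weighted_tailIntegral_sq hK (hφi i) (hφ2 i)

/-- Deterministic backward component of Lemma 3.7 (solvability of the
decoupled system (3.10) with α = 0): for `K > -κ₂` and `φ ∈ L^{2,K}(t,∞)`,
the infinite-horizon backward equation `y' = κ₂ y - φ` has a unique solution
in the weighted space, given explicitly by
`y(s) = ∫_s^∞ e^{-κ₂(r-s)} φ(r) dr`. -/
theorem stmt_10 (n : ℕ) (t K κ₂ : ℝ) (ht : 0 ≤ t) (hK : -κ₂ < K)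
    (φ : ℝ → (Fin n → ℝ)) (hφ : Measurable φ)
    (hφL2 : IntegrableOn (fun s => Real.exp (2*K*s) * (φ s ⬝ᵥ φ s)) (Set.Ici t)) :
    ∃ y : ℝ → (Fin n → ℝ), IsBwdSol t K κ₂ φ y ∧
      (∀ z : ℝ → (Fin n → ℝ), IsBwdSol t K κ₂ φ z → ∀ s, t ≤ s → z s = y s) ∧
      (∀ s, t ≤ s → y s = ∫ r in Set.Ici s, Real.exp (-κ₂ * (r - s)) • φ r) := by
  have hφ2 := (integrableOn_weighted_dotProduct_iff hφ.aestronglyMeasurable).1 hφL2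
  have hsol := isBwdSol_tailIntegral hK hφ hφ2
  refine ⟨_, hsol, fun z hz s hs => hz.eqOn hK hsol hs, fun s hs => ?_⟩
  ext i
  refine (eval_integral (f := fun r => Real.exp (-κ₂ * (r - s)) • φ r) (fun j => ?_) i).symm
  exact integrableOn_exp_neg_mul_sub_mul (integrableOn_exp_neg_mul_mul_of_weighted hK
    ((measurable_pi_apply j).comp hφ) (hφ2 j)) hs
end
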